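/- Let K be a UFD of characteristic p > 0, let A = K[x_1,…,x_n] be the polynomial algebra, B = K[x_1^p,…,x_n^p], and let f_1,…,f_m ∈ A with 1 ≤ m ≤ n. Set R_i = B[f_1,…,f_{i-1},f_{i+1},…,f_m] and, for i ≠ j, R_{ij} = B[f_1,…,f_m with f_i and f_j omitted]. Then the following three conditions are equivalent: (1) dgcd(f_1,…,f_m) is a unit of A (i.e., every common divisor of all m×m jacobian minors of f_1,…,f_m is invertible); (2) f_1,…,f_m form a p-basis over B of the ring of constants of some K-derivation of A; (3) for every i ∈ {1,…,m} and all b,c ∈ R_i with b ≠ 0 and gcd(b,c) a unit, the polynomial b·f_i + c is square-free and B-free, and moreover, if m > 1, then for all i ≠ j in {1,…,m} and all b_1,b_2,c_1,c_2 ∈ R_{ij} with b_1,b_2 ≠ 0, gcd(b_1,c_1) a unit and gcd(b_2,c_2) a unit, the polynomials b_1·f_i + c_1 and b_2·f_j + c_2 have unit gcd. -/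

import Mathlib

open MvPolynomial

/-- The monomial `f₁^{α₁} ⋯ f_m^{α_m}` for a multi-index `α ∈ Ω_m` (all exponents `< p`). -/
def pMonomial {S : Type*} [CommRing S] {m p : ℕ} (f : Fin m → S) (α : Fin m → Fin p) : S :=
  ∏ i, f i ^ (α i : ℕ)

/-- `f₁, …, f_m` are `p`-independent over the subring `B`. -/
def pIndependent {S : Type*} [CommRing S] (B : Subring S) {m : ℕ} (p : ℕ) (f : Fin m → S) : Prop :=
  ∀ b : (Fin m → Fin p) → S, (∀ α, b α ∈ B) →
    ∑ α : Fin m → Fin p, b α * pMonomial f α = 0 → ∀ α, b α = 0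

/-- `f₁, …, f_m` form a `p`-basis of `R` over `B`. -/
def IsPBasis {S : Type*} [CommRing S] (B : Subring S) (R : Set S) {m : ℕ} (p : ℕ)
    (f : Fin m → S) : Prop :=
  (↑B ⊆ R) ∧ (∀ α : Fin m → Fin p, pMonomial f α ∈ R) ∧ pIndependent B p f ∧
    ∀ r ∈ R, ∃ b : (Fin m → Fin p) → S, (∀ α, b α ∈ B) ∧
      r = ∑ α : Fin m → Fin p, b α * pMonomial f α

/-- The jacobian determinant of `f₁,…,f_m` w.r.t. the variables `x_{j₁},…,x_{j_m}`. -/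
noncomputable def jacMinor {K : Type*} [CommRing K] {n m : ℕ} (f : Fin m → MvPolynomial (Fin n) K)
    (j : Fin m → Fin n) : MvPolynomial (Fin n) K :=
  (Matrix.of fun i l => pderiv (j l) (f i)).det

/-- The subring `B = K[x₁^p, …, x_n^p]` of `K[x₁,…,x_n]`. -/
noncomputable def pPowers (K : Type*) [CommRing K] (n p : ℕ) : Subring (MvPolynomial (Fin n) K) :=
  (Algebra.adjoin K (Set.range fun i : Fin n => (X i : MvPolynomial (Fin n) K) ^ p)).toSubring

/-- `R_i = B[f₁,…,f̂ᵢ,…,f_m]`. -/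
noncomputable def Ri (K : Type*) [CommRing K] {n m : ℕ} (p : ℕ) (f : Fin m → MvPolynomial (Fin n) K)
    (i : Fin m) : Subring (MvPolynomial (Fin n) K) :=
  Subring.closure (↑(pPowers K n p) ∪ (f '' {j | j ≠ i}))

/-- `R_{ij} = B[f₁,…,f̂ᵢ,…,f̂ⱼ,…,f_m]`. -/
noncomputable def Rij (K : Type*) [CommRing K] {n m : ℕ} (p : ℕ) (f : Fin m → MvPolynomial (Fin n) K)
    (i j : Fin m) : Subring (MvPolynomial (Fin n) K) :=
  Subring.closure (↑(pPowers K n p) ∪ (f '' {l | l ≠ i ∧ l ≠ j}))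

/-- An element is `B`-free if it has no noninvertible factor from `B`. -/
def BFree {S : Type*} [CommRing S] (B : Subring S) (a : S) : Prop :=
  ∀ b ∈ B, b ∣ a → IsUnit b

/-- `C_B(f₁,…,f_m) = B₀(f₁,…,f_m) ∩ A`: those elements of `A` lying in the field of
fractions of `B[f₁,…,f_m]`. -/
def CB {S : Type*} [CommRing S] (B : Subring S) {m : ℕ} (f : Fin m → S) : Set S :=
  {a | ∃ s t : S, s ∈ Subring.closure (↑B ∪ Set.range f) ∧
      t ∈ Subring.closure (↑B ∪ Set.range f) ∧ s ≠ 0 ∧ a * s = t}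

/-- A `B`-derivation of `A`: additive, Leibniz rule, vanishing on `B`. -/
def IsBDerivation {S : Type*} [CommRing S] (B : Subring S) (d : S → S) : Prop :=
  (∀ x y, d (x + y) = d x + d y) ∧ (∀ x y, d (x * y) = x * d y + y * d x) ∧ ∀ b ∈ B, d b = 0

/-!
The implications (1) ⇒ (2) ⇒ (3) go through *purity* of `f`: an element of `B = K[x₁ᵖ, …, xₙᵖ]`
that divides a `B`-combination of the monomials `f ^ α` divides each of its coefficients.

(1) ⇒ (2): for every prime `q` some minor `J` is nonzero modulo `q`, and replacing a row of `J` by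
partial derivatives gives derivations dual to `f` up to the factor `J`. Applied to a combination
of the `f ^ α` they isolate its coefficients, so `f` is pure. Now fix one minor `J ≠ 0` and complete
`f` by the variables whose columns `J` omits. A derivation that kills `f` and has these variables as
eigenvectors, no nontrivial monomial in them having eigenvalue zero, has the `B`-span of the `f ^ α`
as its constants, by purity.

(2) ⇒ (3): if `d (g a) = 0` and `d g = 0` with `g ≠ 0`, then `d a = 0`; so a `p`-basis of a ring of
constants is pure. If `g ∈ B` divides `(b fᵢ + c) ^ (p - 1) v` with `v ∈ Rᵢ`, then it divides the
extreme coefficients `b ^ (p - 1) v` and `c ^ (p - 1) v`, hence `v`. A repeated factor of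
`b fᵢ + c`, or one shared with some `b₂ fⱼ + c₂`, is ruled out by taking for `g` its `p`-th power.

(3) ⇒ (1): work in the residue field at a prime `q`. If every `fᵢ` lies outside the subfield
generated by `Rᵢ`, over which the field is purely inseparable of exponent one, there are derivations
dual to `f`, hence a minor that is nonzero modulo `q`. Otherwise `q` divides some `b fᵢ + c` with
`b` and `c` coprime. As this is square-free and `B`-free, some `∂ₗ` does not kill it modulo `q`; by
the coprimality condition each other `fⱼ` lies outside the subfield generated by `Rᵢⱼ`, which gives
derivations dual to these `fⱼ`. Together with `∂ₗ` they force the jacobian matrix to have full rank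
modulo `q`.
-/

section PureFamilies

variable {R S ι : Type*} [CommRing R] [CommRing S] [Algebra R S] [Fintype ι] {p : ℕ}

/-- A finite family `x` in an `R`-algebra is *`p`-pure* if any `g : R` dividing an `R`-linear
combination of the `p`-monomials `∏ i, x i ^ α i`, `α i < p`, divides all of its coefficients.
Divisibility is tested in the algebra; the case `g = 0` says that the coefficients of a vanishing
combination vanish. -/
def IsPPure (R : Type*) {S ι : Type*} [CommRing R] [CommRing S] [Algebra R S] [Fintype ι]
    [DecidableEq ι] (p : ℕ) (x : ι → S) : Prop :=
  ∀ (β : (ι → Fin p) → R) (g : R), algebraMap R S g ∣ ∑ α, β α • ∏ i, x i ^ (α i : ℕ) →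
    ∀ α, algebraMap R S g ∣ algebraMap R S (β α)

theorem prod_pow_mem_span_range_prod_pow [NeZero p]
    (hpow : ∀ a : S, a ^ p ∈ (algebraMap R S).range) (x : ι → S) (e : ι → ℕ) :
    ∏ i, x i ^ e i ∈ Submodule.span R (Set.range fun α : ι → Fin p => ∏ i, x i ^ (α i : ℕ)) := by
  obtain ⟨r, hr⟩ : ∏ i, (x i ^ p) ^ (e i / p) ∈ (algebraMap R S).range :=
    prod_mem fun i _ => pow_mem (hpow (x i)) _
  have hsplit : ∏ i, x i ^ e i = r • ∏ i, x i ^ (Fin.ofNat p (e i) : ℕ) := by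
    rw [Algebra.smul_def, hr, ← Finset.prod_mul_distrib]
    refine Finset.prod_congr rfl fun i _ => ?_
    rw [← pow_mul, ← pow_add, Fin.val_ofNat, Nat.div_add_mod]
  rw [hsplit]
  exact Submodule.smul_mem _ _ (Submodule.subset_span ⟨fun i => Fin.ofNat p (e i), rfl⟩)

theorem adjoin_range_eq_span_range_prod_pow [NeZero p]
    (hpow : ∀ a : S, a ^ p ∈ (algebraMap R S).range) (x : ι → S) :
    Subalgebra.toSubmodule (Algebra.adjoin R (Set.range x)) =
      Submodule.span R (Set.range fun α : ι → Fin p => ∏ i, x i ^ (α i : ℕ)) := by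
  refine le_antisymm (fun a ha => ?_) (Submodule.span_le.mpr ?_)
  · rw [Subalgebra.mem_toSubmodule, Algebra.adjoin_range_eq_range_aeval] at ha
    obtain ⟨q, rfl⟩ := ha
    rw [AlgHom.toRingHom_eq_coe, RingHom.coe_coe, aeval_def, eval₂_eq']
    refine sum_mem fun e _ => ?_
    rw [← Algebra.smul_def]
    exact Submodule.smul_mem _ _ (prod_pow_mem_span_range_prod_pow hpow x e)
  · rintro _ ⟨α, rfl⟩
    exact Subalgebra.prod_mem _ fun i _ =>
      pow_mem (Algebra.subset_adjoin (Set.mem_range_self i)) _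

theorem exists_eq_sum_smul_prod_pow [DecidableEq ι] [NeZero p]
    (hpow : ∀ a : S, a ^ p ∈ (algebraMap R S).range) {x : ι → S} {a : S}
    (ha : a ∈ Algebra.adjoin R (Set.range x)) :
    ∃ β : (ι → Fin p) → R, a = ∑ α, β α • ∏ i, x i ^ (α i : ℕ) := by
  rw [← Subalgebra.mem_toSubmodule, adjoin_range_eq_span_range_prod_pow hpow,
    Submodule.mem_span_range_iff_exists_fun] at ha
  obtain ⟨β, hβ⟩ := ha
  exact ⟨β, hβ.symm⟩

variable [DecidableEq ι]

theorem sum_smul_prod_pow_eq_sum_sum_mul_pow (x : ι → S) (i : ι)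
    (β : Fin p × ({j // j ≠ i} → Fin p) → R) :
    ∑ α, β (Equiv.funSplitAt i (Fin p) α) • ∏ j, x j ^ (α j : ℕ) =
      ∑ s, (∑ α, β (s, α) • ∏ j : {j // j ≠ i}, x j ^ (α j : ℕ)) * x i ^ (s : ℕ) := by
  simp only [Finset.sum_mul, smul_mul_assoc]
  rw [← Fintype.sum_prod_type', ← (Equiv.funSplitAt i (Fin p)).sum_comp]
  refine Finset.sum_congr rfl fun α _ => ?_
  rw [Fintype.prod_eq_mul_prod_subtype_ne _ i, mul_comm]
  simp [Equiv.funSplitAt]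

theorem dvd_of_dvd_mul_left_of_isRelPrime {M : Type*} [CommMonoidWithZero M] [IsCancelMulZero M]
    [DecompositionMonoid M] {a b c v : M} (hbc : IsRelPrime b c) (hb : a ∣ b * v)
    (hc : a ∣ c * v) : a ∣ v := by
  obtain ⟨d, e, hdb, ⟨w, rfl⟩, rfl⟩ := exists_dvd_and_dvd_of_dvd_mul hb
  rcases eq_or_ne e 0 with rfl | he
  · simp
  have hdw : d ∣ c * w := by
    rwa [mul_left_comm, mul_comm d, mul_dvd_mul_iff_left he] at hc
  rw [mul_comm d]
  exact mul_dvd_mul_left e ((hbc.of_dvd_left hdb).dvd_of_dvd_mul_left hdw)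

namespace IsPPure

variable {x : ι → S}

theorem dvd_coeff_of_dvd_aeval [NeZero p] (hpow : ∀ a : S, a ^ p ∈ (algebraMap R S).range)
    (hx : IsPPure R p x) {i : ι} {g : R}
    (q : Polynomial (Algebra.adjoin R (x '' {j | j ≠ i}))) (hq : q.natDegree < p)
    (hg : algebraMap R S g ∣ Polynomial.aeval (x i) q) (s : ℕ) :
    algebraMap R S g ∣ q.coeff s := by
  have hexpand (t : Fin p) : ∃ β : ({j // j ≠ i} → Fin p) → R,
      (q.coeff t : S) = ∑ α, β α • ∏ j : {j // j ≠ i}, x j ^ (α j : ℕ) := by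
    refine exists_eq_sum_smul_prod_pow hpow (x := fun j : {j // j ≠ i} => x j) ?_
    simpa only [Set.image_eq_range] using! (q.coeff t).2
  choose β hβ using hexpand
  rcases lt_or_ge s p with hs | hs
  · have hcoeff := hx (fun α => β.uncurry (Equiv.funSplitAt i (Fin p) α)) g <| by
      rw [sum_smul_prod_pow_eq_sum_sum_mul_pow x i]
      rw [Polynomial.aeval_eq_sum_range' hq, Finset.sum_range] at hg
      simpa only [Function.uncurry_apply_pair, ← hβ, Subalgebra.smul_def, smul_eq_mul] using hg
    rw [show (q.coeff s : S) = _ from hβ ⟨s, hs⟩]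
    refine Finset.dvd_sum fun α _ => ?_
    have hα := hcoeff ((Equiv.funSplitAt i (Fin p)).symm (⟨s, hs⟩, α))
    rw [Equiv.apply_symm_apply] at hα
    rw [Algebra.smul_def]
    exact hα.mul_right _
  · simp [Polynomial.coeff_eq_zero_of_natDegree_lt (hq.trans_le hs)]

variable [IsDomain S] [DecompositionMonoid S]

theorem dvd_of_dvd_linear_pow_mul [NeZero p] (hpow : ∀ a : S, a ^ p ∈ (algebraMap R S).range)
    (hx : IsPPure R p x) {i : ι} {g : R} {b c v : S}
    (hb : b ∈ Algebra.adjoin R (x '' {j | j ≠ i})) (hc : c ∈ Algebra.adjoin R (x '' {j | j ≠ i}))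
    (hv : v ∈ Algebra.adjoin R (x '' {j | j ≠ i})) (hbc : IsRelPrime b c)
    (hg : algebraMap R S g ∣ (b * x i + c) ^ (p - 1) * v) : algebraMap R S g ∣ v := by
  let L : Polynomial (Algebra.adjoin R (x '' {j | j ≠ i})) :=
    Polynomial.C ⟨b, hb⟩ * Polynomial.X + Polynomial.C ⟨c, hc⟩
  have hL : L.natDegree ≤ 1 := Polynomial.natDegree_linear_le
  have hdeg : (L ^ (p - 1) * Polynomial.C (⟨v, hv⟩ : Algebra.adjoin R _)).natDegree < p := calc
    _ ≤ (p - 1) * 1 := (Polynomial.natDegree_mul_C_le _ _).trans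
      (Polynomial.natDegree_pow_le_of_le _ hL)
    _ < p := by have := NeZero.pos p; lia
  have hcoeff := dvd_coeff_of_dvd_aeval hpow hx _ hdeg (g := g) <| by
    simpa [L, Subalgebra.algebraMap_eq] using hg
  have hlead := hcoeff ((p - 1) * 1)
  have hconst := hcoeff 0
  rw [Polynomial.coeff_mul_C, Polynomial.coeff_pow_of_natDegree_le hL] at hlead
  rw [Polynomial.coeff_mul_C, Polynomial.coeff_zero_eq_eval_zero, Polynomial.eval_pow] at hconst
  refine dvd_of_dvd_mul_left_of_isRelPrime (hbc.pow (m := p - 1) (n := p - 1)) ?_ ?_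
  · simpa [L] using hlead
  · simpa [L] using hconst

theorem isUnit_of_dvd_linear_pow [NeZero p] (hpow : ∀ a : S, a ^ p ∈ (algebraMap R S).range)
    (hx : IsPPure R p x) {i : ι} {g : R} {b c : S}
    (hb : b ∈ Algebra.adjoin R (x '' {j | j ≠ i})) (hc : c ∈ Algebra.adjoin R (x '' {j | j ≠ i}))
    (hbc : IsRelPrime b c) (hg : algebraMap R S g ∣ (b * x i + c) ^ (p - 1)) :
    IsUnit (algebraMap R S g) :=
  isUnit_of_dvd_one (dvd_of_dvd_linear_pow_mul hpow hx hb hc (one_mem _) hbc (by rwa [mul_one]))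

theorem squarefree_linear (hp : 2 ≤ p) (hpow : ∀ a : S, a ^ p ∈ (algebraMap R S).range)
    (hx : IsPPure R p x) {i : ι} {b c : S} (hb : b ∈ Algebra.adjoin R (x '' {j | j ≠ i}))
    (hc : c ∈ Algebra.adjoin R (x '' {j | j ≠ i})) (hbc : IsRelPrime b c) :
    Squarefree (b * x i + c) := by
  have : NeZero p := ⟨by lia⟩
  intro r hr
  obtain ⟨g, hg⟩ := hpow r
  refine (isUnit_pow_iff (NeZero.ne p)).mp (hg ▸ isUnit_of_dvd_linear_pow hpow hx hb hc hbc ?_)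
  calc algebraMap R S g = r ^ p := hg
    _ ∣ (r * r) ^ (p - 1) := by rw [← sq, ← pow_mul]; exact pow_dvd_pow r (by lia)
    _ ∣ (b * x i + c) ^ (p - 1) := pow_dvd_pow_of_dvd hr _

theorem isUnit_of_dvd_linear (hp : 2 ≤ p) (hpow : ∀ a : S, a ^ p ∈ (algebraMap R S).range)
    (hx : IsPPure R p x) {i : ι} {g : R} {b c : S}
    (hb : b ∈ Algebra.adjoin R (x '' {j | j ≠ i})) (hc : c ∈ Algebra.adjoin R (x '' {j | j ≠ i}))
    (hbc : IsRelPrime b c) (hg : algebraMap R S g ∣ b * x i + c) : IsUnit (algebraMap R S g) := by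
  have : NeZero p := ⟨by lia⟩
  exact isUnit_of_dvd_linear_pow hpow hx hb hc hbc (hg.trans (dvd_pow_self _ (by lia)))

theorem isRelPrime_linear (hp : 2 ≤ p) (hpow : ∀ a : S, a ^ p ∈ (algebraMap R S).range)
    (hx : IsPPure R p x) {i j : ι} (hij : i ≠ j) {b₁ b₂ c₁ c₂ : S}
    (hb₁ : b₁ ∈ Algebra.adjoin R (x '' {l | l ≠ i ∧ l ≠ j}))
    (hb₂ : b₂ ∈ Algebra.adjoin R (x '' {l | l ≠ i ∧ l ≠ j}))
    (hc₁ : c₁ ∈ Algebra.adjoin R (x '' {l | l ≠ i ∧ l ≠ j}))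
    (hc₂ : c₂ ∈ Algebra.adjoin R (x '' {l | l ≠ i ∧ l ≠ j}))
    (hbc₁ : IsRelPrime b₁ c₁) (hbc₂ : IsRelPrime b₂ c₂) :
    IsRelPrime (b₁ * x i + c₁) (b₂ * x j + c₂) := by
  have : NeZero p := ⟨by lia⟩
  have hi : Algebra.adjoin R (x '' {l | l ≠ i ∧ l ≠ j}) ≤ Algebra.adjoin R (x '' {l | l ≠ i}) :=
    Algebra.adjoin_mono (Set.image_mono fun _ h => h.1)
  have hj : Algebra.adjoin R (x '' {l | l ≠ i ∧ l ≠ j}) ≤ Algebra.adjoin R (x '' {l | l ≠ j}) :=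
    Algebra.adjoin_mono (Set.image_mono fun _ h => h.2)
  intro r hr₁ hr₂
  obtain ⟨g, hg⟩ := hpow r
  have hv : b₂ * x j + c₂ ∈ Algebra.adjoin R (x '' {l | l ≠ i}) :=
    add_mem (mul_mem (hi hb₂) (Algebra.subset_adjoin ⟨j, hij.symm, rfl⟩)) (hi hc₂)
  have hgv : algebraMap R S g ∣ b₂ * x j + c₂ := by
    refine dvd_of_dvd_linear_pow_mul hpow hx (hi hb₁) (hi hc₁) hv hbc₁ ?_
    rw [hg, ← pow_sub_one_mul (NeZero.ne p) r]
    exact mul_dvd_mul (pow_dvd_pow_of_dvd hr₁ _) hr₂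
  exact (isUnit_pow_iff (NeZero.ne p)).mp
    (hg ▸ isUnit_of_dvd_linear hp hpow hx (hj hb₂) (hj hc₂) hbc₂ hgv)

end IsPPure

end PureFamilies

section DualDerivations

variable {k R A ι : Type*} [CommRing k] [CommRing R] [CommRing A] [Algebra k A] [Algebra R A]

theorem totalDegree_pderiv_lt {q : MvPolynomial ι R} {i : ι} (h : pderiv i q ≠ 0) :
    (pderiv i q).totalDegree < q.totalDegree := by
  have hmem : ∀ e ∈ (pderiv i q).support, e + Finsupp.single i 1 ∈ q.support := by
    intro e he
    rw [mem_support_iff, coeff_pderiv] at he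
    exact mem_support_iff.mpr (left_ne_zero_of_mul he)
  have hlt : ∀ e ∈ (pderiv i q).support, (e.sum fun _ d => d) < q.totalDegree := by
    intro e he
    refine lt_of_lt_of_le ?_ (le_totalDegree (hmem e he))
    rw [Finsupp.sum_add_index' (by simp) (by simp), Finsupp.sum_single_index rfl]
    exact Nat.lt_succ_self _
  obtain ⟨e, he⟩ := support_nonempty.mpr h
  exact (Finset.sup_lt_iff (Nat.zero_lt_of_lt (hlt e he))).mpr hlt

theorem derivation_aeval_eq_sum_pderiv [Fintype ι] {M : Type*} [AddCommGroup M] [Module k M]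
    [Module A M] (D : Derivation k A M) (hD : ∀ r : R, D (algebraMap R A r) = 0) (x : ι → A)
    (q : MvPolynomial ι R) : D (aeval x q) = ∑ i, aeval x (pderiv i q) • D (x i) := by
  classical
  induction q using MvPolynomial.induction_on with
  | C r => simp [hD]
  | add q₁ q₂ h₁ h₂ => simp only [map_add, h₁, h₂, add_smul, Finset.sum_add_distrib]
  | mul_X q j h =>
    have hpderiv (i : ι) : aeval x (pderiv i (q * X j)) =
        (if i = j then aeval x q else 0) + x j * aeval x (pderiv i q) := by
      rcases eq_or_ne i j with rfl | hij
      · simp [Derivation.leibniz]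
      · simp [Derivation.leibniz, pderiv_X_of_ne hij.symm, hij]
    simp only [hpderiv]
    simp [h, Derivation.leibniz, add_smul, Finset.sum_add_distrib, mul_smul, Finset.smul_sum]

theorem aeval_mem_of_coeff_mem (I : Ideal A) (x : ι → A) {q : MvPolynomial ι R}
    (h : ∀ e, algebraMap R A (coeff e q) ∈ I) : aeval x q ∈ I := by
  rw [aeval_def, eval₂_eq]
  exact Ideal.sum_mem _ fun e _ => I.mul_mem_right _ (h e)

variable {p : ℕ}

theorem algebraMap_coeff_mem_of_forall_pderiv (hp : p.Prime) [CharP A p] {I : Ideal A} {x : ι → A}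
    {q : MvPolynomial ι R} (hq : ∀ e ∈ q.support, ∀ i, e i < p)
    (hqI : aeval x q ∈ I) (h : ∀ i e, algebraMap R A (coeff e (pderiv i q)) ∈ I) (e : ι →₀ ℕ) :
    algebraMap R A (coeff e q) ∈ I := by
  have hne : ∀ e ≠ 0, algebraMap R A (coeff e q) ∈ I := by
    intro e he
    obtain ⟨i, hi⟩ := Finsupp.ne_iff.mp he
    by_cases heq : e ∈ q.support
    · have hsub : e - Finsupp.single i 1 + Finsupp.single i 1 = e :=
        tsub_add_cancel_of_le (by simpa [Nat.one_le_iff_ne_zero] using hi)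
      have hunit : IsUnit ((e i : ℕ) : A) := (CharP.isUnit_natCast_iff hp).mpr
        (Nat.not_dvd_of_pos_of_lt (Nat.pos_of_ne_zero hi) (hq e heq i))
      have hei := h i (e - Finsupp.single i 1)
      rw [coeff_pderiv, hsub, map_mul] at hei
      have hcast : algebraMap R A (((e - Finsupp.single i 1 : ι →₀ ℕ) i : R) + 1) = (e i : ℕ) := by
        rw [← Nat.cast_add_one, map_natCast]
        congr 1
        simpa using congrFun (congrArg DFunLike.coe hsub) i
      rw [hcast] at hei
      exact (I.mul_unit_mem_iff_mem hunit).mp hei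
    · simp [notMem_support_iff.mp heq]
  rcases ne_or_eq e 0 with he | rfl
  · exact hne e he
  classical
  have hrest : aeval x (q - C (coeff 0 q)) ∈ I := by
    refine aeval_mem_of_coeff_mem I x fun e => ?_
    rcases eq_or_ne e 0 with rfl | he
    · simp
    · simpa only [coeff_sub, coeff_C, if_neg he.symm, sub_zero] using hne e he
  simpa using I.sub_mem hqI hrest

theorem algebraMap_coeff_mem_of_aeval_mem [Finite ι] [DecidableEq ι] (hp : p.Prime) [CharP A p]
    {D : ι → Derivation k A A} (hD : ∀ i (r : R), D i (algebraMap R A r) = 0) {x : ι → A} {J : A}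
    (hx : ∀ i j, D i (x j) = if i = j then J else 0) {I : Ideal A} (hDI : ∀ i, ∀ a ∈ I, D i a ∈ I)
    (hJI : ∀ a, J * a ∈ I → a ∈ I) {q : MvPolynomial ι R} (hq : ∀ e ∈ q.support, ∀ i, e i < p)
    (hqI : aeval x q ∈ I) (e : ι →₀ ℕ) : algebraMap R A (coeff e q) ∈ I := by
  have := Fintype.ofFinite ι
  induction hN : q.totalDegree using Nat.strong_induction_on generalizing q e with
  | _ N ih =>
  refine algebraMap_coeff_mem_of_forall_pderiv hp hq hqI (fun i e => ?_) e
  rcases eq_or_ne (pderiv i q) 0 with h0 | h0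
  · simp [h0]
  refine ih _ (hN ▸ totalDegree_pderiv_lt h0) (fun e he l => ?_) (hJI _ ?_) e rfl
  · rw [mem_support_iff, coeff_pderiv] at he
    refine lt_of_le_of_lt ?_ (hq _ (mem_support_iff.mpr (left_ne_zero_of_mul he)) l)
    simp
  · have hDq := hDI i _ hqI
    rw [derivation_aeval_eq_sum_pderiv (D i) (hD i)] at hDq
    simpa [hx, mul_comm J] using hDq

/-- The contraction to `A` of the ideal generated by `g` in the localization of `A` at `P`. In a UFD
it allows divisibility by `g` to be tested at one prime element at a time. -/
def localMultiples (P : Ideal A) [P.IsPrime] (g : A) : Ideal A where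
  carrier := {a | ∃ c ∉ P, g ∣ c * a}
  zero_mem' := ⟨1, P.one_notMem, by simp⟩
  add_mem' := by
    rintro a b ⟨c, hc, hca⟩ ⟨d, hd, hdb⟩
    refine ⟨c * d, ‹P.IsPrime›.mul_notMem hc hd, ?_⟩
    rw [mul_add, mul_right_comm, mul_assoc c d b]
    exact dvd_add (hca.mul_right d) (hdb.mul_left c)
  smul_mem' := by
    rintro a b ⟨c, hc, hcb⟩
    refine ⟨c, hc, ?_⟩
    rw [smul_eq_mul, mul_left_comm]
    exact hcb.mul_left a

theorem mem_localMultiples_of_dvd (P : Ideal A) [P.IsPrime] {g a : A} (h : g ∣ a) :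
    a ∈ localMultiples P g :=
  ⟨1, P.one_notMem, by rwa [one_mul]⟩

theorem mem_localMultiples_of_mul_mem {P : Ideal A} [hP : P.IsPrime] {g c a : A} (hc : c ∉ P)
    (h : c * a ∈ localMultiples P g) : a ∈ localMultiples P g := by
  obtain ⟨d, hd, hda⟩ := h
  exact ⟨d * c, hP.mul_notMem hd hc, by rwa [mul_assoc]⟩

theorem derivation_mem_localMultiples {P : Ideal A} [hP : P.IsPrime] {g a : A}
    (D : Derivation k A A) (hg : D g = 0) (ha : a ∈ localMultiples P g) :
    D a ∈ localMultiples P g := by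
  obtain ⟨c, hc, b, hb⟩ := ha
  refine ⟨c * c, hP.mul_notMem hc hc, c * D b - b * D c, ?_⟩
  have hD := congrArg D hb
  simp only [Derivation.leibniz, hg, smul_eq_mul, mul_zero, add_zero] at hD
  linear_combination c * hD - D c * hb

theorem dvd_of_forall_mem_localMultiples [IsDomain A] [UniqueFactorizationMonoid A] {g a : A}
    (h : ∀ (r : A) [(Ideal.span {r}).IsPrime], a ∈ localMultiples (Ideal.span {r}) g) :
    g ∣ a := by
  rcases eq_or_ne g 0 with rfl | hg
  · have : (Ideal.span {(0 : A)}).IsPrime := by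
      rw [Ideal.span_singleton_zero]
      exact Ideal.isPrime_bot
    obtain ⟨c, hc, hca⟩ := h 0
    rw [Ideal.mem_span_singleton, zero_dvd_iff] at hc
    rw [zero_dvd_iff] at hca ⊢
    exact (mul_eq_zero.mp hca).resolve_left hc
  obtain ⟨g', a', d, hrel, rfl, rfl⟩ := UniqueFactorizationMonoid.exists_reduced_factors g hg a
  refine mul_dvd_mul_left d (IsUnit.dvd ?_)
  by_contra hunit
  obtain ⟨r, hr, hrg⟩ := WfDvdMonoid.exists_irreducible_factor hunit (right_ne_zero_of_mul hg)
  have hprime : Prime r := hr.prime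
  have : (Ideal.span {r}).IsPrime := (Ideal.span_singleton_prime hr.ne_zero).mpr hprime
  obtain ⟨c, hc, hca⟩ := h r
  rw [Ideal.mem_span_singleton] at hc
  rw [mul_left_comm, mul_dvd_mul_iff_left (left_ne_zero_of_mul hg)] at hca
  exact hr.not_isUnit (hrel hrg ((hprime.dvd_or_dvd (hrg.trans hca)).resolve_left hc))

theorem algebraMap_mem_of_sum_smul_prod_pow_mem [Fintype ι] [DecidableEq ι] (hp : p.Prime)
    [CharP A p] {D : ι → Derivation k A A} (hD : ∀ i (r : R), D i (algebraMap R A r) = 0)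
    {x : ι → A} {J : A} (hx : ∀ i j, D i (x j) = if i = j then J else 0) {I : Ideal A}
    (hDI : ∀ i, ∀ a ∈ I, D i a ∈ I) (hJI : ∀ a, J * a ∈ I → a ∈ I) (β : (ι → Fin p) → R)
    (hI : ∑ α, β α • ∏ i, x i ^ (α i : ℕ) ∈ I) (α : ι → Fin p) : algebraMap R A (β α) ∈ I := by
  classical
  let expo (α : ι → Fin p) : ι →₀ ℕ := Finsupp.equivFunOnFinite.symm fun i => α i
  have hexpo : Function.Injective expo := fun α γ h => by
    ext i
    exact DFunLike.congr_fun h i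
  let q : MvPolynomial ι R := ∑ α, monomial (expo α) (β α)
  have hcoeff : coeff (expo α) q = β α := by
    simp [q, coeff_sum, coeff_monomial, hexpo.eq_iff]
  have haeval : aeval x q = ∑ α, β α • ∏ i, x i ^ (α i : ℕ) := by
    simp only [q, map_sum, aeval_monomial, Algebra.smul_def]
    refine Finset.sum_congr rfl fun α _ => ?_
    rw [Finsupp.prod_fintype _ _ (by simp)]
    rfl
  rw [← hcoeff]
  refine algebraMap_coeff_mem_of_aeval_mem hp hD hx hDI hJI (fun e he i => ?_) (haeval ▸ hI) _
  obtain ⟨γ, -, hγ⟩ := Finset.exists_ne_zero_of_sum_ne_zero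
    (by simpa [q, coeff_sum, coeff_monomial] using mem_support_iff.mp he)
  obtain rfl : expo γ = e := by
    by_contra hne
    exact hγ (if_neg hne)
  exact (γ i).2

theorem linearIndependent_prod_pow_of_dual [Fintype ι] [DecidableEq ι] [IsDomain A]
    [FaithfulSMul R A] (hp : p.Prime) [CharP A p] {D : ι → Derivation k A A}
    (hD : ∀ i (r : R), D i (algebraMap R A r) = 0) {x : ι → A} {J : A} (hJ : J ≠ 0)
    (hx : ∀ i j, D i (x j) = if i = j then J else 0) :
    LinearIndependent R fun α : ι → Fin p => ∏ i, x i ^ (α i : ℕ) := by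
  rw [Fintype.linearIndependent_iff]
  intro β hβ α
  have hmem := algebraMap_mem_of_sum_smul_prod_pow_mem hp hD hx (I := ⊥)
    (fun i a ha => by simp [Ideal.mem_bot.mp ha])
    (fun a ha => (mul_eq_zero.mp ha).resolve_left hJ) β hβ α
  rwa [Ideal.mem_bot, FaithfulSMul.algebraMap_eq_zero_iff] at hmem

theorem isPPure_of_forall_exists_dual [Fintype ι] [DecidableEq ι] [IsDomain A]
    [UniqueFactorizationMonoid A] (hp : p.Prime) [CharP A p] {x : ι → A}
    (h : ∀ r : A, ¬ IsUnit r → ∃ (D : ι → Derivation k A A) (J : A),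
      (∀ i (s : R), D i (algebraMap R A s) = 0) ∧
      (∀ i j, D i (x j) = if i = j then J else 0) ∧ ¬ r ∣ J) :
    IsPPure R p x := by
  intro β g hg α
  refine dvd_of_forall_mem_localMultiples fun r hr => ?_
  obtain ⟨D, J, hD, hx, hJ⟩ := h r (mt Ideal.span_singleton_eq_top.mpr hr.ne_top)
  exact algebraMap_mem_of_sum_smul_prod_pow_mem hp hD hx
    (fun i a ha => derivation_mem_localMultiples (D i) (hD i g) ha)
    (fun a ha => mem_localMultiples_of_mul_mem (mt Ideal.mem_span_singleton.mp hJ) ha) β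
    (mem_localMultiples_of_dvd _ hg) α

end DualDerivations

section PPowers

variable {K : Type*} [CommRing K] {n p : ℕ}

theorem X_pow_mem_pPowers (i : Fin n) : (X i : MvPolynomial (Fin n) K) ^ p ∈ pPowers K n p :=
  Algebra.subset_adjoin ⟨i, rfl⟩

theorem C_mem_pPowers (a : K) : (C a : MvPolynomial (Fin n) K) ∈ pPowers K n p :=
  (Algebra.adjoin K _).algebraMap_mem a

theorem pow_mem_pPowers [Fact p.Prime] [CharP K p] (a : MvPolynomial (Fin n) K) :
    a ^ p ∈ pPowers K n p := by
  induction a using MvPolynomial.induction_on with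
  | C a => rw [← C_pow]; exact C_mem_pPowers _
  | add a b ha hb => rw [add_pow_char]; exact add_mem ha hb
  | mul_X a i ha => rw [mul_pow]; exact mul_mem ha (X_pow_mem_pPowers i)

theorem pow_mem_range_algebraMap_pPowers [Fact p.Prime] [CharP K p] (a : MvPolynomial (Fin n) K) :
    a ^ p ∈ (algebraMap (pPowers K n p) (MvPolynomial (Fin n) K)).range :=
  ⟨⟨a ^ p, pow_mem_pPowers a⟩, rfl⟩

theorem derivation_eq_zero_of_mem_pPowers [CharP K p] {M : Type*} [AddCommGroup M] [Module K M]
    [Module (MvPolynomial (Fin n) K) M] [IsScalarTower K (MvPolynomial (Fin n) K) M]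
    (D : Derivation K (MvPolynomial (Fin n) K) M) {b : MvPolynomial (Fin n) K}
    (hb : b ∈ pPowers K n p) : D b = 0 := by
  refine Derivation.eqOn_adjoin (D1 := D) (D2 := 0) ?_ hb
  rintro _ ⟨i, rfl⟩
  simp only [Derivation.leibniz_pow, Derivation.zero_apply]
  rw [← Nat.cast_smul_eq_nsmul (MvPolynomial (Fin n) K) p (_ • D (X i)), CharP.cast_eq_zero,
    zero_smul, smul_zero, smul_zero]

theorem monomial_mem_pPowers {e : Fin n →₀ ℕ} (he : ∀ i, p ∣ e i) (a : K) :
    monomial e a ∈ pPowers K n p := by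
  rw [monomial_eq, Finsupp.prod_fintype _ _ (by simp)]
  refine mul_mem (C_mem_pPowers a) (prod_mem fun i _ => ?_)
  obtain ⟨c, hc⟩ := he i
  rw [hc, pow_mul]
  exact pow_mem (X_pow_mem_pPowers i) c

theorem mem_pPowers_of_pderiv_eq_zero [IsDomain K] [CharP K p] {a : MvPolynomial (Fin n) K}
    (h : ∀ i, pderiv i a = 0) : a ∈ pPowers K n p := by
  rw [a.as_sum]
  refine sum_mem fun e he => monomial_mem_pPowers (fun i => ?_) _
  rcases eq_or_ne (e i) 0 with hei | hei
  · simp [hei]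
  have hsub : e - Finsupp.single i 1 + Finsupp.single i 1 = e :=
    tsub_add_cancel_of_le (by simpa [Nat.one_le_iff_ne_zero] using hei)
  have hcoeff := congrArg (coeff (e - Finsupp.single i 1)) (h i)
  rw [coeff_pderiv, hsub, coeff_zero] at hcoeff
  have hzero := (mul_eq_zero.mp hcoeff).resolve_left (mem_support_iff.mp he)
  rw [← CharP.cast_eq_zero_iff K p, ← hzero, ← Nat.cast_add_one]
  congr 1
  simpa using (DFunLike.congr_fun hsub i).symm

theorem mem_pPowers_of_mul_mem [IsDomain K] [CharP K p] {g a : MvPolynomial (Fin n) K}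
    (hg : g ∈ pPowers K n p) (hg0 : g ≠ 0) (h : g * a ∈ pPowers K n p) : a ∈ pPowers K n p := by
  refine mem_pPowers_of_pderiv_eq_zero fun i => ?_
  have hD := derivation_eq_zero_of_mem_pPowers (pderiv i) h
  rw [Derivation.leibniz, derivation_eq_zero_of_mem_pPowers (pderiv i) hg] at hD
  simpa [hg0] using hD

theorem span_pPowers_range_prod_X_pow_eq_top [Fact p.Prime] [CharP K p] :
    Submodule.span (pPowers K n p) (Set.range fun α : Fin n → Fin p =>
      ∏ i, (X i : MvPolynomial (Fin n) K) ^ (α i : ℕ)) = ⊤ := by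
  have : NeZero p := ⟨(Fact.out : p.Prime).ne_zero⟩
  rw [← adjoin_range_eq_span_range_prod_pow pow_mem_range_algebraMap_pPowers, eq_top_iff]
  intro a _
  rw [Subalgebra.mem_toSubmodule]
  induction a using MvPolynomial.induction_on with
  | C a =>
    exact (Algebra.adjoin _ _).algebraMap_mem (⟨C a, C_mem_pPowers a⟩ : pPowers K n p)
  | add a b ha hb => exact add_mem (ha trivial) (hb trivial)
  | mul_X a i ha => exact mul_mem (ha trivial) (Algebra.subset_adjoin ⟨i, rfl⟩)

end PPowers

section PBasis

variable {S : Type*} [CommRing S] {B : Subring S} {m p : ℕ} {f : Fin m → S}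

theorem IsPPure.pIndependent (h : IsPPure B p f) : pIndependent B p f := fun b hb h0 α =>
  zero_dvd_iff.mp <| h (fun α => ⟨b α, hb α⟩) 0 (h0 ▸ dvd_refl (0 : S)) α

theorem isPPure_of_isPBasis_ker [IsDomain S] {k : Type*} [CommRing k] [Algebra k S]
    {d : Derivation k S S} (hf : IsPBasis B {a | d a = 0} p f) : IsPPure B p f := by
  obtain ⟨hB, hmem, hind, hspan⟩ := hf
  intro β g hg α
  obtain ⟨a, ha⟩ := hg
  rcases eq_or_ne g 0 with rfl | hg0
  · have hβ := hind (fun α => β α) (fun α => (β α).2) (by simpa using! ha) α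
    exact (congrArg (_ ∣ ·) hβ).mpr (dvd_zero _)
  replace hg0 : (g : S) ≠ 0 := by simpa using hg0
  have hda : d a = 0 := by
    have hd : d (∑ α, β α • ∏ i, f i ^ (α i : ℕ)) = 0 := by
      rw [map_sum]
      refine Finset.sum_eq_zero fun α _ => ?_
      have hfα : d (∏ i, f i ^ (α i : ℕ)) = 0 := hmem α
      simp [Subring.smul_def, hfα, show d (β α) = 0 from hB (β α).2]
    rw [ha, Derivation.leibniz, show d (algebraMap B S g) = 0 from hB g.2] at hd
    exact (mul_eq_zero.mp (by simpa using hd)).resolve_left hg0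
  obtain ⟨γ, hγ, rfl⟩ := hspan a hda
  have hsub := hind (fun α => β α - g * γ α)
    (fun α => sub_mem (β α).2 (mul_mem g.2 (hγ α))) (by
      simp only [sub_mul, Finset.sum_sub_distrib, mul_assoc, ← Finset.mul_sum]
      exact sub_eq_zero.mpr ha) α
  exact ⟨γ α, sub_eq_zero.mp hsub⟩

theorem IsPPure.exists_eq_sum_of_smul_mem_adjoin [IsDomain S] [NeZero p]
    (hpow : ∀ a : S, a ^ p ∈ (algebraMap B S).range)
    (hB : ∀ g ∈ B, g ≠ 0 → ∀ a, g * a ∈ B → a ∈ B) (hf : IsPPure B p f) {s : B} (hs : s ≠ 0)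
    {a : S} (ha : s • a ∈ Algebra.adjoin B (Set.range f)) :
    ∃ b : (Fin m → Fin p) → S, (∀ α, b α ∈ B) ∧ a = ∑ α, b α * pMonomial f α := by
  replace hs : (s : S) ≠ 0 := by simpa using hs
  obtain ⟨β, hβ⟩ := exists_eq_sum_smul_prod_pow hpow ha
  choose γ hγ using hf β s ⟨a, hβ.symm⟩
  replace hγ (α : Fin m → Fin p) : (β α : S) = s * γ α := hγ α
  refine ⟨γ, fun α => hB s s.2 hs _ (hγ α ▸ (β α).2), mul_left_cancel₀ hs ?_⟩
  rw [Finset.mul_sum]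
  refine Eq.trans hβ (Finset.sum_congr rfl fun α _ => ?_)
  rw [← mul_assoc, ← hγ]
  rfl

end PBasis

theorem exists_ne_zero_smul_mem_span_range {R M κ : Type*} [CommRing R] [Nontrivial R]
    [AddCommGroup M] [Module R M] [Fintype κ] {v : κ → M} (hv : LinearIndependent R v)
    {w : Set M} [Fintype w] (hw : Submodule.span R w = ⊤) (hcard : Fintype.card w ≤ Fintype.card κ)
    (a : M) : ∃ s : R, s ≠ 0 ∧ s • a ∈ Submodule.span R (Set.range v) := by
  let va : Option κ → M := fun o => o.elim a v
  have hva : ¬ LinearIndependent R va := fun h => by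
    have := linearIndependent_le_span va h w hw
    rw [Cardinal.mk_fintype, Nat.cast_le, Fintype.card_option] at this
    lia
  obtain ⟨c, hc, o, ho⟩ := Fintype.not_linearIndependent_iff.mp hva
  rw [Fintype.sum_option] at hc
  refine ⟨c none, fun h0 => ho ?_, ?_⟩
  · have hsome := Fintype.linearIndependent_iff.mp hv (fun i => c (some i))
      (by simpa [h0, va] using hc)
    cases o with
    | none => exact h0
    | some i => exact hsome i
  · rw [show c none • a = _ from eq_neg_of_add_eq_zero_left hc]
    exact neg_mem (sum_mem fun i _ => Submodule.smul_mem _ _ (Submodule.subset_span ⟨i, rfl⟩))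

section JacobianDerivations

theorem derivation_sum_apply {k A M κ : Type*} [CommRing k] [CommRing A] [Algebra k A]
    [AddCommGroup M] [Module k M] [Module A M] (s : Finset κ) (D : κ → Derivation k A M) (a : A) :
    (∑ i ∈ s, D i) a = ∑ i ∈ s, D i a := by
  rw [← Derivation.coeFnAddMonoidHom_apply, map_sum, Finset.sum_apply]
  rfl

variable {K : Type*} [CommRing K] {n m : ℕ}

/-- The derivation obtained by replacing the `i`-th row of the jacobian matrix of `f` with respect
to the variables `X (j l)` by `∂/∂X (j l)` and taking the determinant. -/
noncomputable def jacobianDerivation (f : Fin m → MvPolynomial (Fin n) K) (j : Fin m → Fin n)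
    (i : Fin m) : Derivation K (MvPolynomial (Fin n) K) (MvPolynomial (Fin n) K) :=
  ∑ l, (Matrix.of fun i l => pderiv (j l) (f i)).adjugate l i • pderiv (j l)

/-- The combination of `∂/∂X t` and the jacobian derivations of `f` that annihilates `f`. -/
noncomputable def complementaryDerivation (f : Fin m → MvPolynomial (Fin n) K)
    (j : Fin m → Fin n) (t : Fin n) :
    Derivation K (MvPolynomial (Fin n) K) (MvPolynomial (Fin n) K) :=
  jacMinor f j • pderiv t - ∑ i, pderiv t (f i) • jacobianDerivation f j i

variable (f : Fin m → MvPolynomial (Fin n) K) (j : Fin m → Fin n)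

theorem jacobianDerivation_apply (i k : Fin m) :
    jacobianDerivation f j i (f k) = if i = k then jacMinor f j else 0 := by
  have h := congrFun₂ (Matrix.mul_adjugate (Matrix.of fun i l => pderiv (j l) (f i))) k i
  simp only [Matrix.mul_apply, Matrix.of_apply, Matrix.smul_apply, Matrix.one_apply,
    smul_eq_mul, mul_ite, mul_one, mul_zero] at h
  simpa only [jacobianDerivation, jacMinor, derivation_sum_apply, Derivation.smul_apply,
    smul_eq_mul, mul_comm (Matrix.adjugate _ _ _), eq_comm (a := i)] using h

theorem jacobianDerivation_X_of_notMem_range (i : Fin m) {t : Fin n} (ht : t ∉ Set.range j) :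
    jacobianDerivation f j i (X t) = 0 := by
  rw [jacobianDerivation, derivation_sum_apply]
  refine Finset.sum_eq_zero fun l _ => ?_
  rw [Derivation.smul_apply, pderiv_X_of_ne (by rintro rfl; exact ht ⟨l, rfl⟩), smul_zero]

theorem complementaryDerivation_apply (t : Fin n) (k : Fin m) :
    complementaryDerivation f j t (f k) = 0 := by
  simp [complementaryDerivation, derivation_sum_apply, jacobianDerivation_apply, mul_comm]

theorem complementaryDerivation_X_of_notMem_range (t : Fin n) {s : Fin n}
    (hs : s ∉ Set.range j) :
    complementaryDerivation f j t (X s) = if t = s then jacMinor f j else 0 := by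
  rcases eq_or_ne t s with rfl | hts
  · simp [complementaryDerivation, derivation_sum_apply,
      jacobianDerivation_X_of_notMem_range f j _ hs]
  · simp [complementaryDerivation, derivation_sum_apply, pderiv_X_of_ne hts.symm, hts,
      jacobianDerivation_X_of_notMem_range f j _ hs]

/-- The family `f` followed by the variables `X t`, `t ∉ Set.range j`. When `jacMinor f j ≠ 0` it
has `n` members and generates `K(X)` over the `p`-th powers of the variables. -/
noncomputable def completedFamily : Fin m ⊕ {t // t ∉ Set.range j} → MvPolynomial (Fin n) K :=
  Sum.elim f fun t => X t.1

/-- Derivations dual, up to the factor `jacMinor f j`, to `completedFamily f j`. -/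
noncomputable def dualDerivation : Fin m ⊕ {t // t ∉ Set.range j} →
    Derivation K (MvPolynomial (Fin n) K) (MvPolynomial (Fin n) K) :=
  Sum.elim (jacobianDerivation f j) fun t => complementaryDerivation f j t.1

theorem dualDerivation_completedFamily [DecidableEq (Fin m ⊕ {t // t ∉ Set.range j})]
    (i k : Fin m ⊕ {t // t ∉ Set.range j}) :
    dualDerivation f j i (completedFamily f j k) = if i = k then jacMinor f j else 0 := by
  rcases i with i | t <;> rcases k with k | s
  · simp [dualDerivation, completedFamily, jacobianDerivation_apply]
  · simp [dualDerivation, completedFamily, jacobianDerivation_X_of_notMem_range f j i s.2]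
  · simp [dualDerivation, completedFamily, complementaryDerivation_apply]
  · simp [dualDerivation, completedFamily, complementaryDerivation_X_of_notMem_range f j t.1 s.2,
      Subtype.ext_iff]

variable {f j}

theorem injective_of_jacMinor_ne_zero (h : jacMinor f j ≠ 0) : Function.Injective j := by
  intro a b hab
  by_contra hne
  exact h (Matrix.det_zero_of_column_eq hne fun i => by simp [hab])

theorem card_sum_compl_range [Fintype {t // t ∉ Set.range j}] (hj : Function.Injective j) :
    Fintype.card (Fin m ⊕ {t // t ∉ Set.range j}) = n := by
  classical
  have e : Fin m ⊕ {t // t ∉ Set.range j} ≃ Fin n :=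
    ((Equiv.ofInjective j hj).sumCongr (Equiv.refl _)).trans (Equiv.Set.sumCompl (Set.range j))
  rw [Fintype.card_congr e, Fintype.card_fin]

theorem linearIndependent_prod_completedFamily_pow [IsDomain K] {p : ℕ} [Fact p.Prime] [CharP K p]
    [Fintype {t // t ∉ Set.range j}] (hJ : jacMinor f j ≠ 0) :
    LinearIndependent (pPowers K n p) fun α : Fin m ⊕ {t // t ∉ Set.range j} → Fin p =>
      ∏ i, completedFamily f j i ^ (α i : ℕ) := by
  classical
  exact linearIndependent_prod_pow_of_dual Fact.out
    (fun i b => derivation_eq_zero_of_mem_pPowers (dualDerivation f j i) b.2) hJ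
    (dualDerivation_completedFamily f j)

theorem exists_smul_eq_sum_prod_completedFamily_pow [IsDomain K] {p : ℕ} [Fact p.Prime] [CharP K p]
    [Fintype {t // t ∉ Set.range j}] [DecidableEq {t // t ∉ Set.range j}]
    (hJ : jacMinor f j ≠ 0) (a : MvPolynomial (Fin n) K) :
    ∃ s : pPowers K n p, s ≠ 0 ∧ ∃ β : (Fin m ⊕ {t // t ∉ Set.range j} → Fin p) → pPowers K n p,
      s • a = ∑ α, β α • ∏ i, completedFamily f j i ^ (α i : ℕ) := by
  classical
  obtain ⟨s, hs, hmem⟩ := exists_ne_zero_smul_mem_span_range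
    (linearIndependent_prod_completedFamily_pow hJ) span_pPowers_range_prod_X_pow_eq_top
    ((Fintype.card_range_le _).trans_eq (by
      simp_rw [Fintype.card_fun, card_sum_compl_range (injective_of_jacMinor_ne_zero hJ),
        Fintype.card_fin])) a
  obtain ⟨β, hβ⟩ := (Submodule.mem_span_range_iff_exists_fun _).mp hmem
  exact ⟨s, hs, β, hβ.symm⟩

end JacobianDerivations

section DiagonalDerivations

variable {k A ι : Type*} [CommRing k] [CommRing A] [Algebra k A]

theorem derivation_prod_pow_of_eigenvector (d : Derivation k A A) {x l : ι → A}
    (hd : ∀ i, d (x i) = l i * x i) (s : Finset ι) (e : ι → ℕ) :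
    d (∏ i ∈ s, x i ^ e i) = (∑ i ∈ s, e i * l i) * ∏ i ∈ s, x i ^ e i := by
  classical
  induction s using Finset.induction_on with
  | empty => simp
  | insert i s hi ih =>
    rw [Finset.prod_insert hi, Finset.sum_insert hi, Derivation.leibniz, ih,
      Derivation.leibniz_pow, hd]
    cases e i with
    | zero => simp
    | succ e => simp only [smul_eq_mul, nsmul_eq_mul, Nat.add_sub_cancel]; ring

theorem mul_weight_eq_zero_of_derivation_sum_eq_zero [IsDomain A] [Fintype ι] [DecidableEq ι]
    {R : Type*} [CommRing R] [Algebra R A] {p : ℕ} {d : Derivation k A A}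
    (hd : ∀ r : R, d (algebraMap R A r) = 0) {x : ι → A} {w : ι → R} {J : A} (hJ : J ≠ 0)
    (hx : ∀ i, d (x i) = algebraMap R A (w i) * J * x i)
    (hind : LinearIndependent R fun α : ι → Fin p => ∏ i, x i ^ (α i : ℕ))
    {β : (ι → Fin p) → R} (hβ : d (∑ α, β α • ∏ i, x i ^ (α i : ℕ)) = 0) (α : ι → Fin p) :
    β α * ∑ i, (α i : ℕ) * w i = 0 := by
  refine Fintype.linearIndependent_iff.mp hind (fun α => β α * ∑ i, (α i : ℕ) * w i) ?_ α
  refine (mul_eq_zero.mp (Eq.trans ?_ hβ)).resolve_left hJ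
  rw [map_sum, Finset.mul_sum]
  refine Finset.sum_congr rfl fun α _ => ?_
  rw [Algebra.smul_def, Algebra.smul_def, Derivation.leibniz, hd,
    derivation_prod_pow_of_eigenvector d hx]
  simp only [map_mul, map_sum, map_natCast, smul_eq_mul, mul_zero, add_zero, ← mul_assoc,
    ← Finset.sum_mul]
  ring

theorem eq_zero_of_sum_mul_X_pow_eq_zero {K σ κ : Type*} [CommRing K] [Fintype κ] {p : ℕ}
    [CharP K p] {t : κ → σ} (ht : Function.Injective t) {a : κ → Fin p}
    (h : ∑ i, ((a i : ℕ) : MvPolynomial σ K) * X (t i) ^ p = 0) (i : κ) : (a i : ℕ) = 0 := by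
  classical
  have hcoeff := congrArg (coeff (Finsupp.single (t i) p)) h
  rw [coeff_sum, Finset.sum_eq_single i] at hcoeff
  · rw [← map_natCast C, coeff_C_mul, coeff_X_pow, if_pos rfl, mul_one, coeff_zero,
      CharP.cast_eq_zero_iff K p] at hcoeff
    exact Nat.eq_zero_of_dvd_of_lt hcoeff (a i).2
  · intro l _ hl
    rw [← map_natCast C, coeff_C_mul, coeff_X_pow, if_neg, mul_zero]
    exact fun heq => hl (ht (Finsupp.single_left_injective (Fin.pos (a i)).ne' heq))
  · simp

variable {K : Type*} [CommRing K] {n m : ℕ}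

/-- The derivation annihilating `f` for which each variable `X t`, `t ∉ Set.range j`, is an
eigenvector with eigenvalue `X t ^ p * jacMinor f j`. -/
noncomputable def diagonalDerivation (p : ℕ) (f : Fin m → MvPolynomial (Fin n) K)
    (j : Fin m → Fin n) [Fintype {t // t ∉ Set.range j}] :
    Derivation K (MvPolynomial (Fin n) K) (MvPolynomial (Fin n) K) :=
  ∑ t : {t // t ∉ Set.range j},
    (X t.1 ^ p * X t.1 : MvPolynomial (Fin n) K) • complementaryDerivation f j t.1

variable {p : ℕ} {f : Fin m → MvPolynomial (Fin n) K} {j : Fin m → Fin n}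
  [Fintype {t // t ∉ Set.range j}]

theorem diagonalDerivation_apply (k : Fin m) : diagonalDerivation p f j (f k) = 0 := by
  simp [diagonalDerivation, derivation_sum_apply, complementaryDerivation_apply]

theorem diagonalDerivation_X_of_notMem_range (s : {t // t ∉ Set.range j}) :
    diagonalDerivation p f j (X s.1) = X s.1 ^ p * jacMinor f j * X s.1 := by
  classical
  simp only [diagonalDerivation, derivation_sum_apply, Derivation.smul_apply,
    complementaryDerivation_X_of_notMem_range f j _ s.2, ← Subtype.ext_iff, smul_eq_mul, mul_ite,
    mul_zero, Finset.sum_ite_eq', Finset.mem_univ, if_true]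
  ring

theorem exists_smul_mem_adjoin_of_diagonalDerivation_eq_zero [IsDomain K] [Fact p.Prime]
    [CharP K p] (hJ : jacMinor f j ≠ 0) {a : MvPolynomial (Fin n) K}
    (ha : diagonalDerivation p f j a = 0) :
    ∃ s : pPowers K n p, s ≠ 0 ∧ s • a ∈ Algebra.adjoin (pPowers K n p) (Set.range f) := by
  classical
  have hB (b : pPowers K n p) : diagonalDerivation p f j (algebraMap _ _ b) = 0 :=
    derivation_eq_zero_of_mem_pPowers _ b.2
  let w : Fin m ⊕ {t // t ∉ Set.range j} → pPowers K n p :=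
    Sum.elim 0 fun t => ⟨X t.1 ^ p, X_pow_mem_pPowers t.1⟩
  have hw : ∀ i, diagonalDerivation p f j (completedFamily f j i) =
      algebraMap _ _ (w i) * jacMinor f j * completedFamily f j i := by
    rintro (i | t)
    · simp [completedFamily, w, diagonalDerivation_apply]
    · exact diagonalDerivation_X_of_notMem_range t
  obtain ⟨s, hs, β, hβ⟩ := exists_smul_eq_sum_prod_completedFamily_pow hJ a
  have hker : diagonalDerivation p f j (s • a) = 0 := by
    rw [Algebra.smul_def, Derivation.leibniz, ha, hB, smul_zero, smul_zero, add_zero]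
  have hweight := mul_weight_eq_zero_of_derivation_sum_eq_zero hB hJ hw
    (linearIndependent_prod_completedFamily_pow hJ) (hβ ▸ hker)
  refine ⟨s, hs, hβ ▸ sum_mem fun α _ => ?_⟩
  rcases mul_eq_zero.mp (hweight α) with hα | hα
  · rw [hα, zero_smul]; exact zero_mem _
  have hexp : ∀ t : {t // t ∉ Set.range j}, (α (Sum.inr t) : ℕ) = 0 :=
    eq_zero_of_sum_mul_X_pow_eq_zero Subtype.val_injective
      (by simpa [w] using! congrArg (algebraMap _ (MvPolynomial (Fin n) K)) hα)
  simp only [Fintype.prod_sum_type, hexp, pow_zero, Finset.prod_const_one, mul_one]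
  exact Subalgebra.smul_mem _ (Subalgebra.prod_mem _ fun i _ =>
    pow_mem (Algebra.subset_adjoin (Set.mem_range_self i)) _) _

end DiagonalDerivations

section DgcdUnit

variable {K : Type*} [CommRing K] [IsDomain K] [UniqueFactorizationMonoid K] {n m p : ℕ}
  [Fact p.Prime] [CharP K p] {f : Fin m → MvPolynomial (Fin n) K}

theorem isPPure_of_isUnit_of_dvd_jacMinor
    (h : ∀ g : MvPolynomial (Fin n) K, (∀ j : Fin m → Fin n, g ∣ jacMinor f j) → IsUnit g) :
    IsPPure (pPowers K n p) p f := by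
  refine isPPure_of_forall_exists_dual (k := K) Fact.out fun r hr => ?_
  obtain ⟨j, hj⟩ : ∃ j, ¬ r ∣ jacMinor f j := by
    by_contra! hdvd
    exact hr (h r hdvd)
  exact ⟨jacobianDerivation f j, jacMinor f j,
    fun i b => derivation_eq_zero_of_mem_pPowers _ b.2, jacobianDerivation_apply f j, hj⟩

theorem exists_isPBasis_ker_of_isUnit_of_dvd_jacMinor
    (h : ∀ g : MvPolynomial (Fin n) K, (∀ j : Fin m → Fin n, g ∣ jacMinor f j) → IsUnit g) :
    ∃ d : Derivation K (MvPolynomial (Fin n) K) (MvPolynomial (Fin n) K),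
      IsPBasis (pPowers K n p) {a | d a = 0} p f := by
  classical
  have : NeZero p := ⟨(Fact.out : p.Prime).ne_zero⟩
  obtain ⟨j, hJ⟩ : ∃ j, jacMinor f j ≠ 0 := by
    by_contra! hzero
    exact not_isUnit_zero (h 0 fun j => (hzero j).symm ▸ dvd_rfl)
  have hpure := isPPure_of_isUnit_of_dvd_jacMinor (p := p) h
  refine ⟨diagonalDerivation p f j, fun b hb => derivation_eq_zero_of_mem_pPowers _ hb,
    fun α => ?_, hpure.pIndependent, fun a ha => ?_⟩
  · have hprod := derivation_prod_pow_of_eigenvector (diagonalDerivation p f j) (x := f) (l := 0)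
      (by simp [diagonalDerivation_apply]) Finset.univ fun i => (α i : ℕ)
    simpa [pMonomial] using hprod
  · obtain ⟨s, hs, hsa⟩ := exists_smul_mem_adjoin_of_diagonalDerivation_eq_zero hJ ha
    exact hpure.exists_eq_sum_of_smul_mem_adjoin pow_mem_range_algebraMap_pPowers
      (fun g hg hg0 _ => mem_pPowers_of_mul_mem hg hg0) hs hsa

end DgcdUnit

section LinearForms

theorem mem_adjoin_of_mem_closure_union {S : Type*} [CommRing S] {B : Subring S} {s : Set S} {a : S}
    (ha : a ∈ Subring.closure (↑B ∪ s)) : a ∈ Algebra.adjoin B s := by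
  rw [← Subalgebra.mem_toSubring, Algebra.adjoin_eq_ring_closure]
  have hrange : Set.range (algebraMap B S) = B := Subtype.range_coe
  rwa [hrange]

variable {K : Type*} [CommRing K] [IsDomain K] [UniqueFactorizationMonoid K] {n m p : ℕ}
  [Fact p.Prime] [CharP K p] {f : Fin m → MvPolynomial (Fin n) K}

theorem IsPPure.squarefree_and_bFree_linear (hf : IsPPure (pPowers K n p) p f) {i : Fin m}
    {b c : MvPolynomial (Fin n) K} (hb : b ∈ Ri K p f i) (hc : c ∈ Ri K p f i)
    (hbc : IsRelPrime b c) :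
    Squarefree (b * f i + c) ∧ BFree (pPowers K n p) (b * f i + c) := by
  have hp := (Fact.out : p.Prime).two_le
  have hb' := mem_adjoin_of_mem_closure_union hb
  have hc' := mem_adjoin_of_mem_closure_union hc
  exact ⟨hf.squarefree_linear hp pow_mem_range_algebraMap_pPowers hb' hc' hbc, fun g hg hdvd =>
    hf.isUnit_of_dvd_linear hp pow_mem_range_algebraMap_pPowers (g := ⟨g, hg⟩) hb' hc' hbc hdvd⟩

theorem IsPPure.isRelPrime_linear_of_mem_Rij (hf : IsPPure (pPowers K n p) p f) {i j : Fin m}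
    (hij : i ≠ j) {b₁ b₂ c₁ c₂ : MvPolynomial (Fin n) K} (hb₁ : b₁ ∈ Rij K p f i j)
    (hb₂ : b₂ ∈ Rij K p f i j) (hc₁ : c₁ ∈ Rij K p f i j) (hc₂ : c₂ ∈ Rij K p f i j)
    (hbc₁ : IsRelPrime b₁ c₁) (hbc₂ : IsRelPrime b₂ c₂) :
    IsRelPrime (b₁ * f i + c₁) (b₂ * f j + c₂) :=
  hf.isRelPrime_linear (Fact.out : p.Prime).two_le pow_mem_range_algebraMap_pPowers hij
    (mem_adjoin_of_mem_closure_union hb₁) (mem_adjoin_of_mem_closure_union hb₂)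
    (mem_adjoin_of_mem_closure_union hc₁) (mem_adjoin_of_mem_closure_union hc₂) hbc₁ hbc₂

end LinearForms

section PurelyInseparable

open IntermediateField

open scoped Polynomial

variable {F E : Type*} [Field F] [Field E] [Algebra F E] {p : ℕ} [Fact p.Prime] [CharP E p]

theorem minpoly_eq_X_pow_sub_C {y : E} {a : F} (hya : y ^ p = algebraMap F E a)
    (hy : y ∉ (algebraMap F E).range) : minpoly F y = Polynomial.X ^ p - Polynomial.C a := by
  have hp : p.Prime := Fact.out
  symm
  refine minpoly.eq_of_irreducible_of_monic ?_ (by simp [hya])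
    (Polynomial.monic_X_pow_sub_C _ hp.ne_zero)
  refine X_pow_sub_C_irreducible_of_prime hp fun b hb => hy ⟨b, frobenius_inj E p ?_⟩
  rw [frobenius_def, frobenius_def, hya, ← hb, map_pow]

theorem finrank_adjoin_simple_eq_of_pow_mem {y : E} (hyp : y ^ p ∈ (algebraMap F E).range)
    (hy : y ∉ (algebraMap F E).range) : Module.finrank F F⟮y⟯ = p := by
  obtain ⟨a, ha⟩ := hyp
  have hintegral : IsIntegral F y := .of_pow (Fact.out : p.Prime).pos (ha ▸ isIntegral_algebraMap)
  rw [adjoin.finrank hintegral, minpoly_eq_X_pow_sub_C ha.symm hy, Polynomial.natDegree_X_pow_sub_C]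

theorem adjoin_simple_eq_of_mem (hpow : ∀ z : E, z ^ p ∈ (algebraMap F E).range) {x y : E}
    (hx : x ∉ (algebraMap F E).range) (hy : y ∉ (algebraMap F E).range) (hxy : x ∈ F⟮y⟯) :
    F⟮x⟯ = F⟮y⟯ := by
  have hfinrank := finrank_adjoin_simple_eq_of_pow_mem (hpow y) hy
  have : FiniteDimensional F F⟮y⟯ :=
    Module.finite_of_finrank_pos (hfinrank ▸ (Fact.out : p.Prime).pos)
  exact eq_of_le_of_finrank_eq (adjoin_simple_le_iff.mpr hxy)
    ((finrank_adjoin_simple_eq_of_pow_mem (hpow x) hx).trans hfinrank.symm)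

theorem exists_derivation_apply_eq_one_of_adjoin_simple_eq_top {x : E}
    (hxp : x ^ p ∈ (algebraMap F E).range) (hx : x ∉ (algebraMap F E).range) (htop : F⟮x⟯ = ⊤) :
    ∃ D : Derivation F E E, D x = 1 := by
  obtain ⟨a, ha⟩ := hxp
  have hintegral : IsIntegral F x := .of_pow (Fact.out : p.Prime).pos (ha ▸ isIntegral_algebraMap)
  have hsurj : Function.Surjective (Polynomial.aeval x : F[X] →ₐ[F] E) := by
    rw [← AlgHom.range_eq_top, ← Algebra.adjoin_singleton_eq_range_aeval,
      ← adjoin_simple_toSubalgebra_of_isAlgebraic hintegral.isAlgebraic, htop, top_toSubalgebra]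
  have hker (g : F[X]) (hg : Polynomial.aeval x g = 0) :
      Polynomial.aeval x (Polynomial.derivative' (R := F) g) = 0 := by
    have : CharP F p := (algebraMap F E).charP (algebraMap F E).injective p
    obtain ⟨u, rfl⟩ := minpoly.dvd F x hg
    have hderiv : Polynomial.derivative (minpoly F x) = 0 := by
      simp [minpoly_eq_X_pow_sub_C ha.symm hx, Polynomial.derivative_X_pow]
    simp [hderiv, minpoly.aeval]
  refine ⟨Derivation.liftOfSurjective hsurj hker, ?_⟩
  simpa using! Derivation.liftOfSurjective_apply hsurj hker Polynomial.X

variable (F) in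
theorem exists_maximal_intermediateField_notMem {x : E} (hx : x ∉ (algebraMap F E).range) :
    ∃ M : IntermediateField F E, Maximal (x ∉ ·) M := by
  have hbound (c : Set (IntermediateField F E)) (hc : c ⊆ {M | x ∉ M}) (hchain : IsChain (· ≤ ·) c)
      (M : IntermediateField F E) (hMc : M ∈ c) : ∃ N ∈ {M | x ∉ M}, ∀ L ∈ c, L ≤ N := by
    refine ⟨sSup c, fun hxc => ?_, fun _ => le_sSup⟩
    have : Nonempty c := ⟨M, hMc⟩
    rw [sSup_eq_iSup', ← SetLike.mem_coe, coe_iSup_of_directed hchain.directedOn.directed_val,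
      Set.mem_iUnion] at hxc
    obtain ⟨N, hxN⟩ := hxc
    exact hc N.2 hxN
  obtain ⟨M, -, hM⟩ := zorn_le_nonempty₀ _ hbound ⊥ (mt mem_bot.mp hx)
  exact ⟨M, hM⟩

-- Over an intermediate field maximal among those avoiding `x`, every element outside generates an
-- extension of degree `p` containing `x`, hence equal to the one generated by `x`.
theorem exists_derivation_apply_eq_one (hpow : ∀ z : E, z ^ p ∈ (algebraMap F E).range) {x : E}
    (hx : x ∉ (algebraMap F E).range) : ∃ D : Derivation F E E, D x = 1 := by
  obtain ⟨M, hM⟩ := exists_maximal_intermediateField_notMem F hx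
  have hrange {z : E} : z ∈ (algebraMap M E).range ↔ z ∈ M := by simp
  have hpowM (z : E) : z ^ p ∈ (algebraMap M E).range := by
    obtain ⟨a, ha⟩ := hpow z
    exact hrange.mpr (ha ▸ M.algebraMap_mem a)
  have htop : M⟮x⟯ = ⊤ := by
    refine eq_top_iff.mpr fun y _ => ?_
    by_cases hy : y ∈ M
    · exact M⟮x⟯.algebraMap_mem ⟨y, hy⟩
    have hle : M ≤ M⟮y⟯.restrictScalars F := fun z hz => M⟮y⟯.algebraMap_mem ⟨z, hz⟩
    have hxy : x ∈ M⟮y⟯ := by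
      by_contra hxy
      exact hy (hM.le_of_ge (y := M⟮y⟯.restrictScalars F) hxy hle (mem_adjoin_simple_self M y))
    rw [adjoin_simple_eq_of_mem hpowM (mt hrange.mp hM.prop) (mt hrange.mp hy) hxy]
    exact mem_adjoin_simple_self M y
  obtain ⟨D, hD⟩ := exists_derivation_apply_eq_one_of_adjoin_simple_eq_top (hpowM x)
    (mt hrange.mp hM.prop) htop
  exact ⟨D.restrictScalars F, hD⟩

end PurelyInseparable

section FractionSubfield

variable {A : Type*} [CommRing A]

/-- The subfield of an `A`-field `ℓ` generated by the image of a subring `R` of `A`. For `ℓ` the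
residue field of a prime ideal `P` it is the fraction field of `R ⧸ (P ∩ R)`. -/
def fractionSubfield (ℓ : Type*) [Field ℓ] [Algebra A ℓ] (R : Subring A) : Subfield ℓ :=
  Subfield.closure (algebraMap A ℓ '' R)

variable {ℓ : Type*} [Field ℓ] [Algebra A ℓ] {R : Subring A}

theorem algebraMap_mem_fractionSubfield {r : A} (hr : r ∈ R) :
    algebraMap A ℓ r ∈ fractionSubfield ℓ R :=
  Subfield.subset_closure ⟨r, hr, rfl⟩

theorem fractionSubfield_mono {R' : Subring A} (h : R ≤ R') :
    fractionSubfield ℓ R ≤ fractionSubfield ℓ R' :=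
  Subfield.closure_mono (Set.image_mono h)

theorem fractionSubfield_closure_le {s : Set A} {L : Subfield ℓ}
    (h : ∀ a ∈ s, algebraMap A ℓ a ∈ L) : fractionSubfield ℓ (Subring.closure s) ≤ L := by
  have hle : Subring.closure s ≤ L.toSubring.comap (algebraMap A ℓ) := Subring.closure_le.mpr h
  exact Subfield.closure_le.mpr (Set.image_subset_iff.mpr hle)

theorem exists_linear_eq_zero_of_algebraMap_mem_fractionSubfield {x : A}
    (hx : algebraMap A ℓ x ∈ fractionSubfield ℓ R) :
    ∃ b ∈ R, ∃ c ∈ R, algebraMap A ℓ b ≠ 0 ∧ algebraMap A ℓ (b * x + c) = 0 := by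
  rw [fractionSubfield, Subfield.mem_closure_iff, ← Subring.coe_map, Subring.closure_eq] at hx
  obtain ⟨_, ⟨r, hr, rfl⟩, _, ⟨s, hs, rfl⟩, hquot⟩ := hx
  by_cases hs0 : algebraMap A ℓ s = 0
  · refine ⟨1, one_mem _, 0, zero_mem _, by simp, ?_⟩
    simp [← hquot, hs0]
  · exact ⟨s, hs, -r, neg_mem hr, hs0, by simp [← hquot, mul_div_cancel₀ _ hs0]⟩

theorem exists_derivation_of_algebraMap_notMem_fractionSubfield (k : Type*) [CommRing k]
    [Algebra k A] [Algebra k ℓ] [IsScalarTower k A ℓ] (hk : ∀ c : k, algebraMap k A c ∈ R) {p : ℕ}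
    [Fact p.Prime] [CharP ℓ p] (hpow : ∀ z : ℓ, z ^ p ∈ fractionSubfield ℓ R) {x : A}
    (hx : algebraMap A ℓ x ∉ fractionSubfield ℓ R) :
    ∃ E : Derivation k A ℓ,
      (∀ r ∈ R, E r = 0) ∧ (∀ a, algebraMap A ℓ a = 0 → E a = 0) ∧ E x = 1 := by
  have hrange : (algebraMap (fractionSubfield ℓ R) ℓ).range = (fractionSubfield ℓ R).toSubring :=
    Subring.range_subtype _
  obtain ⟨D, hD⟩ := exists_derivation_apply_eq_one (F := fractionSubfield ℓ R)
    (fun z => by rw [hrange]; exact hpow z) (by rwa [hrange])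
  let _ : Algebra k (fractionSubfield ℓ R) :=
    ((algebraMap k ℓ).codRestrict (fractionSubfield ℓ R) fun c => by
      rw [IsScalarTower.algebraMap_apply k A ℓ]
      exact algebraMap_mem_fractionSubfield (hk c)).toAlgebra
  have : IsScalarTower k (fractionSubfield ℓ R) ℓ := .of_algebraMap_eq fun _ => rfl
  refine ⟨(D.restrictScalars k).compAlgebraMap A, fun r hr => ?_, fun a ha => ?_, hD⟩
  · exact D.map_algebraMap ⟨_, algebraMap_mem_fractionSubfield hr⟩
  · rw [Derivation.compAlgebraMap_apply, ha, map_zero]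

end FractionSubfield

section ResidueField

variable {A : Type*} [CommRing A] {P : Ideal A} [P.IsPrime] {p : ℕ}

theorem pow_mem_fractionSubfield_residueField {R : Subring A} (hpow : ∀ a : A, a ^ p ∈ R)
    (z : P.ResidueField) : z ^ p ∈ fractionSubfield P.ResidueField R := by
  obtain ⟨a, b, -, rfl⟩ := IsFractionRing.div_surjective (A ⧸ P) z
  obtain ⟨a, rfl⟩ := Ideal.Quotient.mk_surjective a
  obtain ⟨b, rfl⟩ := Ideal.Quotient.mk_surjective b
  rw [div_pow]
  simp only [← map_pow]
  exact div_mem (algebraMap_mem_fractionSubfield (hpow a))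
    (algebraMap_mem_fractionSubfield (hpow b))

theorem charP_residueField [Fact p.Prime] [CharP A p] : CharP P.ResidueField p := by
  refine (CharP.charP_iff_prime_eq_zero Fact.out).mpr ?_
  rw [← map_natCast (algebraMap A P.ResidueField), CharP.cast_eq_zero, map_zero]

end ResidueField

section CoprimeAdjustment

variable {A : Type*} [CommRing A] [IsDomain A] [UniqueFactorizationMonoid A]

theorem exists_forall_prime_dvd_iff_not_dvd {b : A} (hb : b ≠ 0) (c : A) :
    ∃ v : A, ∀ r, Prime r → r ∣ b → (r ∣ v ↔ ¬ r ∣ c) := by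
  classical
  refine ⟨((UniqueFactorizationMonoid.factors b).filter (¬ · ∣ c)).prod, fun r hr hrb =>
    ⟨fun hrv hrc => ?_, fun hrc => ?_⟩⟩
  · obtain ⟨s, hs, hrs⟩ := hr.exists_mem_multiset_dvd hrv
    obtain ⟨hsb, hsc⟩ := Multiset.mem_filter.mp hs
    have hassoc : Associated r s := (hr.dvd_prime_iff_associated
      (UniqueFactorizationMonoid.prime_of_factor s hsb)).mp hrs
    exact hsc (hassoc.symm.dvd.trans hrc)
  · obtain ⟨s, hs, hrs⟩ :=
      UniqueFactorizationMonoid.exists_mem_factors_of_dvd hb hr.irreducible hrb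
    exact hrs.dvd.trans (Multiset.dvd_prod
      (Multiset.mem_filter.mpr ⟨hs, fun hsc => hrc (hrs.dvd.trans hsc)⟩))

theorem exists_isRelPrime_add_mul_pow {b q : A} (hq : Prime q) (hqb : ¬ q ∣ b) (c : A) {p : ℕ}
    (hp : p ≠ 0) : ∃ v : A, IsRelPrime b (c + q ^ p * v ^ p) := by
  have hb : b ≠ 0 := fun h => hqb (h ▸ dvd_zero q)
  obtain ⟨v, hv⟩ := exists_forall_prime_dvd_iff_not_dvd hb c
  refine ⟨v, UniqueFactorizationMonoid.isRelPrime_iff_no_prime_factors hb |>.mpr ?_⟩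
  intro r hrb hrc hr
  have hrq : ¬ r ∣ q := fun h => hqb (((hr.dvd_prime_iff_associated hq).mp h).symm.dvd.trans hrb)
  have hrqv : r ∣ q ^ p * v ^ p ↔ r ∣ v := by
    rw [hr.dvd_mul, hr.dvd_pow_iff_dvd hp, hr.dvd_pow_iff_dvd hp, or_iff_right hrq]
  by_cases hc : r ∣ c
  · exact (hv r hr hrb).mp (hrqv.mp ((dvd_add_right hc).mp hrc)) hc
  · exact hc ((dvd_add_left (hrqv.mpr ((hv r hr hrb).mpr hc))).mp hrc)

theorem exists_isRelPrime_dvd_linear {ℓ : Type*} [Field ℓ] [Algebra A ℓ] {q : A} (hq : Prime q)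
    (hker : ∀ a, algebraMap A ℓ a = 0 ↔ q ∣ a) {p : ℕ} (hp : p ≠ 0) {R : Subring A}
    (hpow : ∀ a : A, a ^ p ∈ R) {x : A} (hx : algebraMap A ℓ x ∈ fractionSubfield ℓ R) :
    ∃ b ∈ R, ∃ c ∈ R, b ≠ 0 ∧ IsRelPrime b c ∧ q ∣ b * x + c := by
  obtain ⟨b, hb, c, hc, hb0, hzero⟩ := exists_linear_eq_zero_of_algebraMap_mem_fractionSubfield hx
  rw [Ne, hker] at hb0
  obtain ⟨v, hv⟩ := exists_isRelPrime_add_mul_pow hq hb0 c hp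
  refine ⟨b, hb, _, add_mem hc (mul_mem (hpow q) (hpow v)), fun h => hb0 (h ▸ dvd_zero q), hv, ?_⟩
  rw [← add_assoc]
  exact dvd_add ((hker _).mp hzero) ((dvd_pow_self q hp).mul_right _)

end CoprimeAdjustment

section JacobianRank

theorem not_dvd_pderiv {R ι : Type*} [CommRing R] [IsDomain R] {q : MvPolynomial ι R} {i : ι}
    (h : pderiv i q ≠ 0) : ¬ q ∣ pderiv i q := fun hdvd =>
  (totalDegree_pderiv_lt h).not_ge (totalDegree_le_of_dvd_of_isDomain hdvd h)

theorem exists_not_dvd_pderiv {K : Type*} [CommRing K] [IsDomain K] {n p : ℕ} [CharP K p]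
    {q w : MvPolynomial (Fin n) K} (hq : Prime q) (hqw : q ∣ w) (hsq : Squarefree w)
    (hfree : BFree (pPowers K n p) w) : ∃ l, ¬ q ∣ pderiv l w := by
  obtain ⟨l, hl⟩ : ∃ l, pderiv l q ≠ 0 := by
    by_contra! hzero
    exact hq.not_isUnit (hfree q (mem_pPowers_of_pderiv_eq_zero hzero) hqw)
  obtain ⟨u, rfl⟩ := hqw
  refine ⟨l, fun hdvd => ?_⟩
  rw [Derivation.leibniz, smul_eq_mul, smul_eq_mul, dvd_add_right (dvd_mul_right q _)] at hdvd
  rcases hq.dvd_or_dvd hdvd with hqu | hqq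
  · exact hq.not_isUnit (hsq q (mul_dvd_mul_left q hqu))
  · exact not_dvd_pderiv hl hqq

theorem det_mul_eq_zero_of_forall_det_submatrix_eq_zero {R m n : Type*} [CommRing R] [Fintype m]
    [DecidableEq m] [Fintype n] (M : Matrix m n R) (N : Matrix n m R)
    (hN : ∀ j : m → n, (N.submatrix j id).det = 0) : (M * N).det = 0 := by
  classical
  have hrows : M * N = fun i => ∑ l, M i l • N l := by
    ext i k
    simp [Matrix.mul_apply]
  change Matrix.detRowAlternating.toMultilinearMap (M * N) = 0
  rw [hrows, MultilinearMap.map_sum]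
  refine Finset.sum_eq_zero fun j _ => ?_
  rw [MultilinearMap.map_smul_univ]
  exact (congrArg _ (hN j)).trans (smul_zero _)

theorem exists_algebraMap_jacMinor_ne_zero {K ℓ : Type*} [CommRing K] {n m : ℕ} [Field ℓ]
    [Algebra K ℓ] [Algebra (MvPolynomial (Fin n) K) ℓ] [IsScalarTower K (MvPolynomial (Fin n) K) ℓ]
    {f : Fin m → MvPolynomial (Fin n) K} (E : Fin m → Derivation K (MvPolynomial (Fin n) K) ℓ)
    (hE : LinearIndependent ℓ fun i k => E i (f k)) :
    ∃ j : Fin m → Fin n, algebraMap _ ℓ (jacMinor f j) ≠ 0 := by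
  by_contra! hminor
  let J : Matrix (Fin n) (Fin m) ℓ := .of fun l k => algebraMap _ ℓ (pderiv l (f k))
  have hchain : Matrix.of (fun i k => E i (f k)) = Matrix.of (fun i l => E i (X l)) * J := by
    ext i k
    have hfk := derivation_aeval_eq_sum_pderiv (E i) (E i).map_algebraMap X (f k)
    simpa [J, Matrix.mul_apply, Algebra.smul_def, mul_comm] using hfk
  have hJ (j : Fin m → Fin n) : (J.submatrix j id).det = 0 := by
    rw [← hminor j, jacMinor, RingHom.map_det, ← Matrix.det_transpose]
    rfl
  have hunit := (Matrix.linearIndependent_rows_iff_isUnit (A := .of fun i k => E i (f k))).mp hE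
  rw [Matrix.isUnit_iff_isUnit_det, hchain,
    det_mul_eq_zero_of_forall_det_submatrix_eq_zero _ _ hJ] at hunit
  exact not_isUnit_zero hunit

theorem derivation_eq_zero_of_mem_closure {k A M : Type*} [CommRing k] [CommRing A] [Algebra k A]
    [AddCommGroup M] [Module k M] [Module A M] (D : Derivation k A M) {s : Set A}
    (hD : ∀ a ∈ s, D a = 0) {a : A} (ha : a ∈ Subring.closure s) : D a = 0 := by
  induction ha using Subring.closure_induction with
  | mem a ha => exact hD a ha
  | zero => exact map_zero D
  | one => exact D.map_one_eq_zero
  | add a b _ _ ha hb => rw [map_add, ha, hb, add_zero]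
  | neg a _ ha => rw [map_neg, ha, neg_zero]
  | mul a b _ _ ha hb => rw [D.leibniz, ha, hb, smul_zero, smul_zero, add_zero]

theorem linearIndependent_derivation_apply {k A ℓ ι : Type*} [CommRing k] [CommRing A]
    [Algebra k A] [Field ℓ] [Algebra k ℓ] [Algebra A ℓ] [IsScalarTower k A ℓ] [Finite ι]
    {B : Subring A} {f : ι → A} (E : ι → Derivation k A ℓ)
    (hEB : ∀ i, ∀ b ∈ B, E i b = 0) {i : ι} (hE1 : ∀ j ≠ i, E j (f j) = 1)
    (hE0 : ∀ j ≠ i, ∀ k ≠ i, j ≠ k → E j (f k) = 0) {w : A}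
    (hw : w ∈ Subring.closure (↑B ∪ Set.range f)) (hwi : E i w ≠ 0) (hwj : ∀ j ≠ i, E j w = 0) :
    LinearIndependent ℓ fun j k => E j (f k) := by
  cases nonempty_fintype ι
  rw [Fintype.linearIndependent_iff]
  intro t ht
  have happly (a : A) : (∑ j, t j • E j) a = ∑ j, t j * E j a := by
    simp [derivation_sum_apply]
  have hf (k : ι) : ∑ j, t j * E j (f k) = 0 := by simpa using congrFun ht k
  have hDw : (∑ j, t j • E j) w = 0 := by
    refine derivation_eq_zero_of_mem_closure _ ?_ hw
    rintro a (hb | ⟨k, rfl⟩)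
    · simp [happly, hEB _ a hb]
    · rw [happly, hf]
  have hti : t i = 0 := by
    rw [happly, Fintype.sum_eq_single i fun j hj => by rw [hwj j hj, mul_zero]] at hDw
    exact (mul_eq_zero.mp hDw).resolve_right hwi
  intro k
  by_cases hk : k = i
  · exact hk ▸ hti
  have hfk := hf k
  rw [Fintype.sum_eq_single k fun j hjk => ?_, hE1 k hk, mul_one] at hfk
  · exact hfk
  · by_cases hj : j = i
    · rw [hj, hti, zero_mul]
    · rw [hE0 j hj k hk hjk, mul_zero]

end JacobianRank

section DgcdOfLinearForms

variable {K : Type*} [CommRing K] {n m p : ℕ} {f : Fin m → MvPolynomial (Fin n) K}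

theorem pPowers_le_Ri (i : Fin m) : pPowers K n p ≤ Ri K p f i := fun _ hb =>
  Subring.subset_closure (Or.inl hb)

theorem pPowers_le_Rij (i j : Fin m) : pPowers K n p ≤ Rij K p f i j := fun _ hb =>
  Subring.subset_closure (Or.inl hb)

theorem mem_Ri {i j : Fin m} (hji : j ≠ i) : f j ∈ Ri K p f i :=
  Subring.subset_closure (Or.inr ⟨j, hji, rfl⟩)

theorem mem_Rij {i j k : Fin m} (hki : k ≠ i) (hkj : k ≠ j) : f k ∈ Rij K p f i j :=
  Subring.subset_closure (Or.inr ⟨k, ⟨hki, hkj⟩, rfl⟩)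

theorem Ri_le_closure_union_range (i : Fin m) :
    Ri K p f i ≤ Subring.closure (↑(pPowers K n p) ∪ Set.range f) :=
  Subring.closure_mono (Set.union_subset_union_right _ (Set.image_subset_range f _))

variable {ℓ : Type*} [Field ℓ] [Algebra (MvPolynomial (Fin n) K) ℓ]

theorem fractionSubfield_Ri_le_of_mem {i j : Fin m}
    (hj : algebraMap _ ℓ (f j) ∈ fractionSubfield ℓ (Rij K p f i j)) :
    fractionSubfield ℓ (Ri K p f i) ≤ fractionSubfield ℓ (Rij K p f i j) := by
  refine fractionSubfield_closure_le ?_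
  rintro _ (hb | ⟨k, hki, rfl⟩)
  · exact algebraMap_mem_fractionSubfield (pPowers_le_Rij i j hb)
  · rcases eq_or_ne k j with rfl | hkj
    · exact hj
    · exact algebraMap_mem_fractionSubfield (mem_Rij hki hkj)

section

variable [Algebra K ℓ] [IsScalarTower K (MvPolynomial (Fin n) K) ℓ] [Fact p.Prime] [CharP ℓ p]
  (hpow : ∀ z : ℓ, z ^ p ∈ fractionSubfield ℓ (pPowers K n p))

include hpow

theorem exists_algebraMap_jacMinor_ne_zero_of_forall_notMem
    (hf : ∀ i, algebraMap _ ℓ (f i) ∉ fractionSubfield ℓ (Ri K p f i)) :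
    ∃ j : Fin m → Fin n, algebraMap _ ℓ (jacMinor f j) ≠ 0 := by
  choose E hER _ hE1 using fun i => exists_derivation_of_algebraMap_notMem_fractionSubfield K
    (fun c => pPowers_le_Ri i (C_mem_pPowers c))
    (fun z => fractionSubfield_mono (pPowers_le_Ri i) (hpow z)) (hf i)
  refine exists_algebraMap_jacMinor_ne_zero E ?_
  have hone : (fun i k => E i (f k)) = fun i => Pi.single i (1 : ℓ) := by
    ext i k
    rcases eq_or_ne k i with rfl | hki
    · rw [hE1, Pi.single_eq_same]
    · rw [hER i _ (mem_Ri hki), Pi.single_eq_of_ne hki]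
  rw [hone]
  exact Pi.linearIndependent_single_one (Fin m) ℓ

theorem exists_algebraMap_jacMinor_ne_zero_of_pderiv_ne_zero [CharP K p] {i : Fin m}
    (hf : ∀ j ≠ i, algebraMap _ ℓ (f j) ∉ fractionSubfield ℓ (Rij K p f i j))
    {w : MvPolynomial (Fin n) K} (hw : w ∈ Subring.closure (↑(pPowers K n p) ∪ Set.range f))
    (hw0 : algebraMap _ ℓ w = 0) {l : Fin n} (hl : algebraMap _ ℓ (pderiv l w) ≠ 0) :
    ∃ j : Fin m → Fin n, algebraMap _ ℓ (jacMinor f j) ≠ 0 := by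
  choose! E hER hE0 hE1 using fun j hj => exists_derivation_of_algebraMap_notMem_fractionSubfield K
    (fun c => pPowers_le_Rij i j (C_mem_pPowers c))
    (fun z => fractionSubfield_mono (pPowers_le_Rij i j) (hpow z)) (hf j hj)
  let D := (Algebra.linearMap (MvPolynomial (Fin n) K) ℓ).compDer (pderiv l)
  have hne {j} (hj : j ≠ i) : Function.update E i D j = E j := Function.update_of_ne hj _ _
  refine exists_algebraMap_jacMinor_ne_zero (Function.update E i D)
    (linearIndependent_derivation_apply (i := i) _
      (fun j _ => derivation_eq_zero_of_mem_pPowers _) (fun j hj => ?_)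
      (fun j hj k hk hjk => ?_) hw ?_ fun j hj => ?_)
  · rw [hne hj, hE1 j hj]
  · rw [hne hj, hER j hj _ (mem_Rij hk hjk.symm)]
  · rwa [Function.update_self]
  · rw [hne hj, hE0 j hj w hw0]

end

variable [IsDomain K] [UniqueFactorizationMonoid K] [Fact p.Prime] [CharP K p]

theorem algebraMap_notMem_fractionSubfield_Rij {q : MvPolynomial (Fin n) K} (hq : Prime q)
    (hker : ∀ a, algebraMap _ ℓ a = 0 ↔ q ∣ a) {i j : Fin m}
    (hcoprime : ∀ b₁ b₂ c₁ c₂ : MvPolynomial (Fin n) K,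
      b₁ ∈ Rij K p f i j → b₂ ∈ Rij K p f i j → c₁ ∈ Rij K p f i j → c₂ ∈ Rij K p f i j →
      b₁ ≠ 0 → b₂ ≠ 0 → IsRelPrime b₁ c₁ → IsRelPrime b₂ c₂ →
      IsRelPrime (b₁ * f i + c₁) (b₂ * f j + c₂))
    (hi : algebraMap _ ℓ (f i) ∈ fractionSubfield ℓ (Ri K p f i)) :
    algebraMap _ ℓ (f j) ∉ fractionSubfield ℓ (Rij K p f i j) := by
  intro hj
  have hpow (a : MvPolynomial (Fin n) K) : a ^ p ∈ Rij K p f i j :=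
    pPowers_le_Rij i j (pow_mem_pPowers a)
  have hp := (Fact.out : p.Prime).ne_zero
  obtain ⟨b₁, hb₁, c₁, hc₁, hb₁0, hbc₁, hdvd₁⟩ :=
    exists_isRelPrime_dvd_linear hq hker hp hpow (fractionSubfield_Ri_le_of_mem hj hi)
  obtain ⟨b₂, hb₂, c₂, hc₂, hb₂0, hbc₂, hdvd₂⟩ := exists_isRelPrime_dvd_linear hq hker hp hpow hj
  exact hq.not_isUnit
    (hcoprime b₁ b₂ c₁ c₂ hb₁ hb₂ hc₁ hc₂ hb₁0 hb₂0 hbc₁ hbc₂ hdvd₁ hdvd₂)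

variable
  (hfree : ∀ i : Fin m, ∀ b c : MvPolynomial (Fin n) K, b ∈ Ri K p f i → c ∈ Ri K p f i → b ≠ 0 →
    IsRelPrime b c → Squarefree (b * f i + c) ∧ BFree (pPowers K n p) (b * f i + c))
  (hcoprime : ∀ i j : Fin m, i ≠ j → ∀ b₁ b₂ c₁ c₂ : MvPolynomial (Fin n) K,
    b₁ ∈ Rij K p f i j → b₂ ∈ Rij K p f i j → c₁ ∈ Rij K p f i j → c₂ ∈ Rij K p f i j →
    b₁ ≠ 0 → b₂ ≠ 0 → IsRelPrime b₁ c₁ → IsRelPrime b₂ c₂ →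
    IsRelPrime (b₁ * f i + c₁) (b₂ * f j + c₂))

include hfree hcoprime

theorem exists_algebraMap_jacMinor_ne_zero_of_linear [Algebra K ℓ]
    [IsScalarTower K (MvPolynomial (Fin n) K) ℓ] [CharP ℓ p]
    (hpow : ∀ z : ℓ, z ^ p ∈ fractionSubfield ℓ (pPowers K n p)) {q : MvPolynomial (Fin n) K}
    (hq : Prime q) (hker : ∀ a, algebraMap _ ℓ a = 0 ↔ q ∣ a) :
    ∃ j : Fin m → Fin n, algebraMap _ ℓ (jacMinor f j) ≠ 0 := by
  by_cases hf : ∀ i, algebraMap _ ℓ (f i) ∉ fractionSubfield ℓ (Ri K p f i)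
  · exact exists_algebraMap_jacMinor_ne_zero_of_forall_notMem hpow hf
  push Not at hf
  obtain ⟨i, hi⟩ := hf
  obtain ⟨b, hb, c, hc, hb0, hbc, hdvd⟩ := exists_isRelPrime_dvd_linear hq hker
    (Fact.out : p.Prime).ne_zero (fun a => pPowers_le_Ri i (pow_mem_pPowers a)) hi
  obtain ⟨hsq, hBfree⟩ := hfree i b c hb hc hb0 hbc
  obtain ⟨l, hl⟩ := exists_not_dvd_pderiv hq hdvd hsq hBfree
  refine exists_algebraMap_jacMinor_ne_zero_of_pderiv_ne_zero hpow (i := i) (fun j hj => ?_) ?_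
    ((hker _).mpr hdvd) (mt (hker _).mp hl)
  · exact algebraMap_notMem_fractionSubfield_Rij hq hker (hcoprime i j hj.symm) hi
  · have hle := Ri_le_closure_union_range (K := K) (p := p) (f := f) i
    exact add_mem (mul_mem (hle hb) (Subring.subset_closure (Or.inr ⟨i, rfl⟩))) (hle hc)

theorem exists_not_prime_dvd_jacMinor {q : MvPolynomial (Fin n) K} (hq : Prime q) :
    ∃ j : Fin m → Fin n, ¬ q ∣ jacMinor f j := by
  have : (Ideal.span {q}).IsPrime := (Ideal.span_singleton_prime hq.ne_zero).mpr hq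
  have : CharP (Ideal.span {q}).ResidueField p := charP_residueField
  have hker (a : MvPolynomial (Fin n) K) :
      algebraMap _ (Ideal.span {q}).ResidueField a = 0 ↔ q ∣ a := by
    rw [Ideal.algebraMap_residueField_eq_zero, Ideal.mem_span_singleton]
  obtain ⟨j, hj⟩ := exists_algebraMap_jacMinor_ne_zero_of_linear hfree hcoprime
    (pow_mem_fractionSubfield_residueField pow_mem_pPowers) hq hker
  exact ⟨j, mt (hker _).mpr hj⟩

theorem isUnit_of_dvd_jacMinor_of_linear (hn : 0 < n) {g : MvPolynomial (Fin n) K}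
    (hg : ∀ j : Fin m → Fin n, g ∣ jacMinor f j) : IsUnit g := by
  by_contra hunit
  obtain ⟨q, hq, hqg⟩ : ∃ q, Prime q ∧ q ∣ g := by
    rcases eq_or_ne g 0 with rfl | hg0
    · exact ⟨X ⟨0, hn⟩, X_prime, dvd_zero _⟩
    · obtain ⟨q, hq, hqg⟩ := WfDvdMonoid.exists_irreducible_factor hunit hg0
      exact ⟨q, hq.prime, hqg⟩
  obtain ⟨j, hj⟩ := exists_not_prime_dvd_jacMinor hfree hcoprime hq
  exact hj (hqg.trans (hg j))

end DgcdOfLinearForms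

/-- **Theorem 2 (main theorem).** Characterization of `p`-bases of rings of constants of
polynomial derivations over a UFD `K` of characteristic `p > 0`. -/
theorem pBasis_of_ring_of_constants_tfae
    {K : Type*} [CommRing K] [IsDomain K] [UniqueFactorizationMonoid K]
    (p : ℕ) (hp : 0 < p) [CharP K p] {n m : ℕ} (hm : 1 ≤ m) (hmn : m ≤ n)
    (f : Fin m → MvPolynomial (Fin n) K) :
    List.TFAE [
      -- (1) `dgcd(f₁,…,f_m) ∼ 1`: every common divisor of all `m×m` jacobian minors is a unit
      (∀ g : MvPolynomial (Fin n) K,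
        (∀ j : Fin m → Fin n, g ∣ jacMinor f j) → IsUnit g),
      -- (2) `f₁,…,f_m` form a `p`-basis over `B` of the ring of constants of some `K`-derivation
      (∃ d : Derivation K (MvPolynomial (Fin n) K) (MvPolynomial (Fin n) K),
        IsPBasis (pPowers K n p) {a | d a = 0} p f),
      -- (3) the square-free/`B`-free and coprimality conditions
      ((∀ i : Fin m, ∀ b c : MvPolynomial (Fin n) K,
          b ∈ Ri K p f i → c ∈ Ri K p f i → b ≠ 0 → IsRelPrime b c →
          Squarefree (b * f i + c) ∧ BFree (pPowers K n p) (b * f i + c)) ∧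
       (1 < m → ∀ i j : Fin m, i ≠ j →
          ∀ b₁ b₂ c₁ c₂ : MvPolynomial (Fin n) K,
          b₁ ∈ Rij K p f i j → b₂ ∈ Rij K p f i j →
          c₁ ∈ Rij K p f i j → c₂ ∈ Rij K p f i j →
          b₁ ≠ 0 → b₂ ≠ 0 → IsRelPrime b₁ c₁ → IsRelPrime b₂ c₂ →
          IsRelPrime (b₁ * f i + c₁) (b₂ * f j + c₂)))] := by
  have : Fact p.Prime := ⟨(CharP.char_is_prime_or_zero K p).resolve_right hp.ne'⟩
  tfae_have 1 → 2 := exists_isPBasis_ker_of_isUnit_of_dvd_jacMinor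
  tfae_have 2 → 3 := by
    rintro ⟨d, hd⟩
    have hf := isPPure_of_isPBasis_ker hd
    exact ⟨fun i b c hb hc _ hbc => hf.squarefree_and_bFree_linear hb hc hbc,
      fun _ i j hij b₁ b₂ c₁ c₂ hb₁ hb₂ hc₁ hc₂ _ _ hbc₁ hbc₂ =>
        hf.isRelPrime_linear_of_mem_Rij hij hb₁ hb₂ hc₁ hc₂ hbc₁ hbc₂⟩
  tfae_have 3 → 1 := by
    rintro ⟨hfree, hcoprime⟩ g hg
    refine isUnit_of_dvd_jacMinor_of_linear hfree (fun i j hij => ?_) (by omega) hg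
    exact hcoprime (by omega) i j hij
  tfae_finish
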